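/- arXiv:0709.0092 — 8 statements merged into one kernel-verified Lean document; each statement's English description precedes it below -/
import Mathlib

section
/- Let X be a connected Hausdorff topological space and let 𝔘 be a finite cover of X by open connected subsets such that the set ∂𝔘 := ⋃_{U ∈ 𝔘} ∂U (the union of the topological boundaries of the members of 𝔘) is finite and nonempty. Then there exists a subfamily 𝔙 ⊆ 𝔘 which still covers X and whose cardinality is at most the cardinality of ∂𝔘. -/
/-!
A union of finitely many open sets that contains the frontier of each of them is clopen, hence
the whole space if it is nonempty and the space is connected. It therefore suffices to choose one
member of the cover for each point of the union of the frontiers.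
-/

open Set

theorem exists_finset_card_le_ncard_of_subset_sUnion {α : Type*} {B : Set α} {𝔘 : Set (Set α)}
    (hfin : B.Finite) (hcover : B ⊆ ⋃₀ 𝔘) :
    ∃ 𝔙 : Finset (Set α), ↑𝔙 ⊆ 𝔘 ∧ B ⊆ ⋃₀ ↑𝔙 ∧ 𝔙.card ≤ B.ncard := by
  classical
  lift B to Finset α using hfin
  have hchoice : ∀ b ∈ B, ∃ U ∈ 𝔘, b ∈ U := fun _ hb => mem_sUnion.1 (hcover hb)
  choose! f hf hmem using hchoice
  refine ⟨B.image f, ?_, fun b hb => ⟨f b, Finset.mem_image_of_mem f hb, hmem b hb⟩, ?_⟩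
  · rw [Finset.coe_image]
    exact image_subset_iff.2 fun b hb => hf b hb
  · rw [ncard_coe_finset]
    exact Finset.card_image_le

section LocallyFinite

variable {ι X : Type*} [TopologicalSpace X] {U : ι → Set X}

theorem isClosed_iUnion_of_iUnion_frontier_subset (hU : LocallyFinite U)
    (hfrontier : ⋃ i, frontier (U i) ⊆ ⋃ i, U i) : IsClosed (⋃ i, U i) := by
  rw [← closure_subset_iff_isClosed, hU.closure_iUnion]
  simp only [closure_eq_self_union_frontier, iUnion_union_distrib]
  exact union_subset Subset.rfl hfrontier

theorem iUnion_eq_univ_of_iUnion_frontier_subset [PreconnectedSpace X] (hU : LocallyFinite U)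
    (hopen : ∀ i, IsOpen (U i)) (hfrontier : ⋃ i, frontier (U i) ⊆ ⋃ i, U i)
    (hne : (⋃ i, U i).Nonempty) : ⋃ i, U i = univ :=
  IsClopen.eq_univ
    ⟨isClosed_iUnion_of_iUnion_frontier_subset hU hfrontier, isOpen_iUnion hopen⟩ hne

end LocallyFinite

theorem stmt_0_general {X : Type*} [TopologicalSpace X] [PreconnectedSpace X] (𝔘 : Set (Set X))
    (hopen : ∀ U ∈ 𝔘, IsOpen U)
    (hcover : ⋃ U ∈ 𝔘, frontier U ⊆ ⋃₀ 𝔘)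
    (hfin : (⋃ U ∈ 𝔘, frontier U).Finite)
    (hne : (⋃ U ∈ 𝔘, frontier U).Nonempty) :
    ∃ 𝔙 : Finset (Set X), ↑𝔙 ⊆ 𝔘 ∧ (∀ x : X, ∃ U ∈ 𝔙, x ∈ U) ∧
      𝔙.card ≤ (⋃ U ∈ 𝔘, frontier U).ncard := by
  obtain ⟨𝔙, hsub, hfrontier, hcard⟩ := exists_finset_card_le_ncard_of_subset_sUnion hfin hcover
  refine ⟨𝔙, hsub, sUnion_eq_univ_iff.1 ?_, hcard⟩
  rw [sUnion_eq_iUnion] at hfrontier ⊢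
  have hfrontier_sub : ⋃ U : (𝔙 : Set (Set X)), frontier (U : Set X) ⊆ ⋃ U ∈ 𝔘, frontier U :=
    iUnion_subset fun U => subset_biUnion_of_mem (u := frontier) (hsub U.2)
  exact iUnion_eq_univ_of_iUnion_frontier_subset (locallyFinite_of_finite _)
    (fun U => hopen U (hsub U.2)) (hfrontier_sub.trans hfrontier) (hne.mono hfrontier)

/-- Let `X` be a connected Hausdorff topological space and `𝔘` a finite
cover of `X` by open connected subsets such that the union of the topological boundaries
of the members of `𝔘` is finite and nonempty.  Then some subfamily `𝔙 ⊆ 𝔘` still covers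
`X` and has cardinality at most that of `⋃ U ∈ 𝔘, frontier U`. -/
theorem stmt_0 {X : Type*} [TopologicalSpace X] [T2Space X] [ConnectedSpace X]
    (𝔘 : Finset (Set X))
    (hopen : ∀ U ∈ 𝔘, IsOpen U)
    (hconn : ∀ U ∈ 𝔘, IsConnected U)
    (hcover : ∀ x : X, ∃ U ∈ 𝔘, x ∈ U)
    (hfin : (⋃ U ∈ 𝔘, frontier U).Finite)
    (hne : (⋃ U ∈ 𝔘, frontier U).Nonempty) :
    ∃ 𝔙 ⊆ 𝔘, (∀ x : X, ∃ U ∈ 𝔙, x ∈ U) ∧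
      𝔙.card ≤ (⋃ U ∈ 𝔘, frontier U).ncard :=
  stmt_0_general 𝔘 hopen (fun x _ => mem_sUnion.2 (hcover x)) hfin hne
end

section
/- Let K be a field equipped with a nontrivial nonarchimedean absolute value |·|, with respect to which K is complete and algebraically closed, and assume that |n·1_K| = 1 for every positive integer n (i.e. the residue characteristic of K is zero). Let R ∈ K(z) be a rational function of degree at least 2. Then there is no strictly increasing sequence (n_j) of positive integers such that, for every j, the iterate R^{n_j} has no poles in the closed unit ball 𝒪_K = {z ∈ K : |z| ≤ 1} and sup_{z ∈ 𝒪_K} |R^{n_j}(z) − z| tends to 0 as j → ∞. In other words, no subsequence of the sequence of iterates of R converges uniformly to the identity on 𝒪_K. -/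
open Polynomial

/-- Composition of rational functions: `ratComp R S = R ∘ S`, obtained by evaluating `R`
at the rational function `S`. -/
noncomputable def ratComp {K : Type*} [Field K] (R S : RatFunc K) : RatFunc K :=
  RatFunc.eval (algebraMap K (RatFunc K)) S R

/-!
Bound a polynomial on the closed unit ball by interpolating it at `0, 1, …, d`: the differences of
these nodes have absolute value `1`, so its Gauss norm is its supremum on the ball. The denominator
of a rational function without poles in the ball has constant absolute value there; hence such a
function, if bounded by `M` on the ball, is `M`-Lipschitz.

Suppose now that `f = R^a` has no pole in the ball and `|f(z) - z| ≤ ε < 1` there. Then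
`g(z) = f(z) - z` is `ε`-Lipschitz, and summing `g` along the orbit of `z` gives
`|f^k(z) - z - k g(z)| ≤ ε |g(z)|`. As `|k| = 1`, this forces `|f^k(z) - z| = |f(z) - z|`.

If `R^a` and `R^b` are both of this kind, then `R^{ab}` is an iterate of each, so
`|R^a(z) - z| = |R^b(z) - z|` on the ball. Thus all iterates of `R` that are close to the identity
move each point by the same amount. This amount is nonzero for some point since `R^a ≠ X`: an
equation `R^a = X` would give `K(R) = K(X)`, whereas `[K(X) : K(R)] = deg R ≥ 2`.
-/

theorem val_natCast_sub_natCast {A : Type*} [CommRing A] {v : AbsoluteValue A ℝ}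
    (hres : ∀ n : ℕ, 0 < n → v (n : A) = 1) {i j : ℕ} (hij : i ≠ j) : v ((i : A) - j) = 1 := by
  wlog h : j < i generalizing i j
  · rw [v.map_sub]
    exact this hij.symm (hij.lt_of_le (not_lt.mp h))
  · rw [← Nat.cast_sub h.le]
    exact hres _ (Nat.sub_pos_of_lt h)

section GaussNorm

variable {A : Type*} [CommRing A] [Nontrivial A] {v : AbsoluteValue A ℝ} {c : ℝ}

theorem val_eval_le_gaussNorm (hna : IsNonarchimedean v) (p : A[X]) {x : A} (hx : v x ≤ c) :
    v (p.eval x) ≤ p.gaussNorm v c := by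
  have hc : 0 ≤ c := (v.nonneg x).trans hx
  rw [eval_eq_sum_range]
  refine (hna.apply_sum_le_sup Finset.nonempty_range_add_one).trans
    (Finset.sup'_le _ _ fun i _ => ?_)
  calc v (p.coeff i * x ^ i) ≤ v (p.coeff i) * c ^ i := by
        rw [map_mul, map_pow]
        gcongr
    _ ≤ p.gaussNorm v c := p.le_gaussNorm v hc i

theorem gaussNorm_X_sub_C (hna : IsNonarchimedean v) (hc : 0 < c) (a : A) :
    (X - C a).gaussNorm v c = max c (v a) := by
  have hX : (X : A[X]).gaussNorm v c = c := by
    simpa [monomial_one_one_eq_X] using gaussNorm_monomial v c 1 (1 : A)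
  refine le_antisymm ?_ (max_le ?_ ?_)
  · have h := isNonarchimedean_gaussNorm v hna hc.le X (C (-a))
    rwa [C_neg, ← sub_eq_add_neg, hX, ← C_neg, gaussNorm_C v c, v.map_neg] at h
  · have hone : (X - C a).coeff 1 = 1 := by simp [coeff_X]
    have h := le_gaussNorm v (X - C a) hc.le 1
    rwa [hone, v.map_one, pow_one, one_mul] at h
  · have hzero : (X - C a).coeff 0 = -a := by simp
    have h := le_gaussNorm v (X - C a) hc.le 0
    rwa [hzero, v.map_neg, pow_zero, mul_one] at h

theorem mul_val_eval_sub_le (hna : IsNonarchimedean v) (hc : 0 < c) (p : A[X]) {x y : A}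
    (hx : v x ≤ c) (hy : v y ≤ c) :
    c * v (p.eval x - p.eval y) ≤ p.gaussNorm v c * v (x - y) := by
  obtain ⟨q, hq⟩ := X_sub_C_dvd_sub_C_eval (a := y) (p := p)
  have hnorm : c * q.gaussNorm v c ≤ p.gaussNorm v c := by
    calc c * q.gaussNorm v c = (p + C (-p.eval y)).gaussNorm v c := by
          rw [C_neg, ← sub_eq_add_neg, hq, gaussNorm_mul hna hc, gaussNorm_X_sub_C hna hc,
            max_eq_left hy]
      _ ≤ p.gaussNorm v c := by
          refine (isNonarchimedean_gaussNorm v hna hc.le _ _).trans (max_le le_rfl ?_)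
          rw [gaussNorm_C v c, v.map_neg]
          exact val_eval_le_gaussNorm hna p hy
  have heval : p.eval x - p.eval y = (x - y) * q.eval x := by
    simpa using congrArg (eval x) hq
  calc c * v (p.eval x - p.eval y) = c * v (q.eval x) * v (x - y) := by
        rw [heval, v.map_mul]; ring
    _ ≤ c * q.gaussNorm v c * v (x - y) := by
        gcongr
        exact val_eval_le_gaussNorm hna q hx
    _ ≤ p.gaussNorm v c * v (x - y) := by gcongr

end GaussNorm

section GaussNormField

variable {K : Type*} [Field K] {v : AbsoluteValue K ℝ}

theorem val_eval_eq_gaussNorm (hna : IsNonarchimedean v) {c : ℝ} (hc : 0 < c) {q : K[X]}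
    (hq : q.Splits) (hroots : ∀ z, v z ≤ c → q.eval z ≠ 0) {z : K} (hz : v z ≤ c) :
    v (q.eval z) = q.gaussNorm v c := by
  have := gaussNorm_isAbsoluteValue hna hc
  let w := IsAbsoluteValue.toAbsoluteValue (gaussNorm v c)
  have hfactor : ∀ a ∈ q.roots, v ((X - C a).eval z) = w (X - C a) := by
    intro a ha
    have hca : c < v a := not_le.mp fun hac => hroots a hac (isRoot_of_mem_roots ha)
    calc v ((X - C a).eval z) = v (-a) := by
          rw [eval_sub, eval_X, eval_C, sub_eq_add_neg,
            hna.add_eq_right_of_lt (by rw [v.map_neg]; exact hz.trans_lt hca)]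
      _ = (X - C a).gaussNorm v c := by
          rw [gaussNorm_X_sub_C hna hc, max_eq_right hca.le, v.map_neg]
  have hlead : v ((C q.leadingCoeff).eval z) = w (C q.leadingCoeff) := by
    rw [eval_C]
    exact (gaussNorm_C v c _).symm
  change _ = w q
  rw [hq.eq_prod_roots, eval_mul, eval_multiset_prod, map_mul, map_mul, map_multiset_prod,
    map_multiset_prod, hlead]
  simp only [Multiset.map_map, Function.comp_def]
  rw [Multiset.map_congr rfl hfactor]

theorem gaussNorm_lagrangeBasis_le_one {ι : Type*} [DecidableEq ι] (hna : IsNonarchimedean v)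
    {s : Finset ι} {u : ι → K} (hball : ∀ i ∈ s, v (u i) ≤ 1)
    (hsep : (s : Set ι).Pairwise fun i j => v (u i - u j) = 1) {i : ι} (hi : i ∈ s) :
    (Lagrange.basis s u i).gaussNorm v 1 ≤ 1 := by
  have := gaussNorm_isAbsoluteValue hna one_pos
  let w := IsAbsoluteValue.toAbsoluteValue (gaussNorm v 1)
  change w (∏ j ∈ s.erase i, Lagrange.basisDivisor (u i) (u j)) ≤ 1
  rw [map_prod]
  refine Finset.prod_le_one (fun j _ => w.nonneg _) fun j hj => ?_
  obtain ⟨hji, hjs⟩ := Finset.mem_erase.mp hj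
  change (C (u i - u j)⁻¹ * (X - C (u j))).gaussNorm v 1 ≤ 1
  rw [gaussNorm_mul hna one_pos, gaussNorm_C v 1, gaussNorm_X_sub_C hna one_pos,
    map_inv₀, hsep hi hjs hji.symm, max_eq_left (hball j hjs), inv_one, one_mul]

theorem gaussNorm_le_of_forall_node {ι : Type*} (hna : IsNonarchimedean v) {s : Finset ι}
    {u : ι → K} (hball : ∀ i ∈ s, v (u i) ≤ 1)
    (hsep : (s : Set ι).Pairwise fun i j => v (u i - u j) = 1) {p : K[X]}
    (hp : p.degree < s.card) {M : ℝ} (hM : 0 ≤ M) (hbound : ∀ i ∈ s, v (p.eval (u i)) ≤ M) :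
    p.gaussNorm v 1 ≤ M := by
  classical
  have hinj : Set.InjOn u s := by
    intro i hi j hj hij
    by_contra hne
    simpa [hij] using hsep hi hj hne
  rcases s.eq_empty_or_nonempty with rfl | hs
  · have hp0 : p = 0 := by simpa using hp
    simpa [hp0] using hM
  rw [Lagrange.eq_interpolate hinj hp, Lagrange.interpolate_apply]
  refine ((isNonarchimedean_gaussNorm v hna zero_le_one).apply_sum_le_sup hs).trans
    (Finset.sup'_le _ _ fun i hi => ?_)
  rw [gaussNorm_mul hna one_pos, gaussNorm_C v 1]
  exact (mul_le_of_le_one_right (v.nonneg _)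
    (gaussNorm_lagrangeBasis_le_one hna hball hsep hi)).trans (hbound i hi)

theorem gaussNorm_le_of_forall_val_le_one (hna : IsNonarchimedean v)
    (hres : ∀ n : ℕ, 0 < n → v (n : K) = 1) {p : K[X]} {M : ℝ}
    (hbound : ∀ z, v z ≤ 1 → v (p.eval z) ≤ M) : p.gaussNorm v 1 ≤ M := by
  have hM : 0 ≤ M := (v.nonneg _).trans (hbound 0 (by simp))
  have hball : ∀ n : ℕ, v (n : K) ≤ 1 := fun _ => hna.apply_natCast_le_one
  refine gaussNorm_le_of_forall_node (s := Finset.range (p.natDegree + 1)) (u := Nat.cast) hna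
    (fun n _ => hball n) (fun i _ j _ hij => val_natCast_sub_natCast hres hij) ?_ hM
    fun n _ => hbound n (hball n)
  rw [Finset.card_range]
  exact degree_le_natDegree.trans_lt (by exact_mod_cast p.natDegree.lt_succ_self)

end GaussNormField

section Values

variable {K : Type*} [Field K] {F G : RatFunc K} {z c d : K}

/-- The rational function `F` has no pole at `z` and takes the value `c` there. The first clause is
needed because `RatFunc.eval` returns `0` at a pole. -/
def HasValueAt (F : RatFunc K) (z c : K) : Prop :=
  F.denom.eval z ≠ 0 ∧ F.eval (RingHom.id K) z = c

theorem hasValueAt_C (a z : K) : HasValueAt (RatFunc.C a) z a := by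
  simp [HasValueAt]

theorem hasValueAt_X (z : K) : HasValueAt RatFunc.X z z := by
  simp [HasValueAt]

theorem HasValueAt.add (hF : HasValueAt F z c) (hG : HasValueAt G z d) :
    HasValueAt (F + G) z (c + d) := by
  refine ⟨fun h => ?_, by rw [RatFunc.eval_add _ _ hF.1 hG.1, hF.2, hG.2]⟩
  simpa [hF.1, hG.1] using eval_eq_zero_of_dvd_of_eval_eq_zero (RatFunc.denom_add_dvd F G) h

theorem HasValueAt.mul (hF : HasValueAt F z c) (hG : HasValueAt G z d) :
    HasValueAt (F * G) z (c * d) := by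
  refine ⟨fun h => ?_, by rw [RatFunc.eval_mul _ _ hF.1 hG.1, hF.2, hG.2]⟩
  simpa [hF.1, hG.1] using eval_eq_zero_of_dvd_of_eval_eq_zero (RatFunc.denom_mul_dvd F G) h

theorem HasValueAt.sub (hF : HasValueAt F z c) (hG : HasValueAt G z d) :
    HasValueAt (F - G) z (c - d) := by
  simpa [sub_eq_add_neg] using hF.add ((hasValueAt_C (-1) z).mul hG)

theorem HasValueAt.eval_num (hF : HasValueAt F z c) : F.num.eval z = c * F.denom.eval z :=
  (div_eq_iff hF.1).mp hF.2

theorem HasValueAt.inv (hF : HasValueAt F z c) (hc : c ≠ 0) : HasValueAt F⁻¹ z c⁻¹ := by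
  have hF0 : F ≠ 0 := by
    rintro rfl
    exact hc (by simpa using hF.2.symm)
  have hreg : F⁻¹.denom.eval z ≠ 0 := fun h => by
    have hnum := eval_eq_zero_of_dvd_of_eval_eq_zero (RatFunc.denom_inv_dvd hF0) h
    rw [hF.eval_num] at hnum
    exact mul_ne_zero hc hF.1 hnum
  refine ⟨hreg, eq_inv_of_mul_eq_one_left ?_⟩
  rw [← hF.2, ← RatFunc.eval_mul _ _ hreg hF.1, inv_mul_cancel₀ hF0, RatFunc.eval_one]

theorem HasValueAt.div (hF : HasValueAt F z c) (hG : HasValueAt G z d) (hd : d ≠ 0) :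
    HasValueAt (F / G) z (c / d) := by
  simpa only [div_eq_mul_inv] using hF.mul (hG.inv hd)

theorem HasValueAt.aeval (hF : HasValueAt F z c) (p : K[X]) :
    HasValueAt (aeval F p) z (p.eval c) := by
  induction p using Polynomial.induction_on with
  | C a => simpa using hasValueAt_C a z
  | add p q hp hq => simpa using hp.add hq
  | monomial n a h => simpa [pow_succ, mul_assoc] using h.mul hF

theorem HasValueAt.ratComp (hG : HasValueAt G z c) (hF : HasValueAt F c d) :
    HasValueAt (ratComp F G) z d := by
  have h := (hG.aeval F.num).div (hG.aeval F.denom) hF.1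
  rwa [hF.eval_num, mul_div_cancel_right₀ d hF.1] at h

theorem eq_of_infinite_hasValueAt {s : Set K} (hs : s.Infinite) {f : K → K}
    (hF : ∀ z ∈ s, HasValueAt F z (f z)) (hG : ∀ z ∈ s, HasValueAt G z (f z)) : F = G := by
  rw [← sub_eq_zero, ← RatFunc.num_eq_zero_iff]
  refine Polynomial.eq_zero_of_infinite_isRoot _ (hs.mono fun z hz => ?_)
  simpa using ((hF z hz).sub (hG z hz)).eval_num

theorem exists_val_le_one_and_eval_ne {v : AbsoluteValue K ℝ} (hna : IsNonarchimedean v)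
    (hres : ∀ n : ℕ, 0 < n → v (n : K) = 1) (hreg : ∀ z, v z ≤ 1 → F.denom.eval z ≠ 0)
    (hX : F ≠ RatFunc.X) : ∃ z, v z ≤ 1 ∧ F.eval (RingHom.id K) z ≠ z := by
  by_contra! hfix
  have hinj : Function.Injective (Nat.cast : ℕ → K) := fun i j hij => by
    by_contra hne
    simpa [hij] using val_natCast_sub_natCast hres hne
  have hball : ∀ z ∈ Set.range (Nat.cast : ℕ → K), v z ≤ 1 := by
    rintro _ ⟨n, rfl⟩
    exact hna.apply_natCast_le_one
  exact hX (eq_of_infinite_hasValueAt (Set.infinite_range_of_injective hinj)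
    (fun z hz => ⟨hreg z (hball z hz), hfix z (hball z hz)⟩) fun z _ => hasValueAt_X z)

end Values

section Substitution

variable {K : Type*} [Field K]

/-- Substitution of `T` as a `K`-algebra endomorphism `S ↦ S ∘ T` of `K(X)`. Unlike `ratComp`,
which is total, it requires `T` to be nonconstant. -/
noncomputable def substAlgHom (T : RatFunc K) (hT : Transcendental K T) :
    RatFunc K →ₐ[K] RatFunc K :=
  (IntermediateField.adjoin K {T}).val.comp (RatFunc.algEquivOfTranscendental T hT)

theorem algHom_apply_eq_ratComp (φ : RatFunc K →ₐ[K] RatFunc K) (S : RatFunc K) :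
    φ S = ratComp S (φ RatFunc.X) := by
  have hpoly (p : K[X]) : φ (algebraMap K[X] (RatFunc K) p) = aeval (φ RatFunc.X) p := by
    rw [← RatFunc.aeval_X_left_eq_algebraMap, aeval_algHom_apply]
  conv_lhs => rw [← RatFunc.num_div_denom S, map_div₀, hpoly, hpoly]
  rfl

theorem substAlgHom_X (T : RatFunc K) (hT : Transcendental K T) :
    substAlgHom T hT RatFunc.X = T :=
  RatFunc.algEquivOfTranscendental_X T hT

theorem iterate_ratComp_X {R : RatFunc K} (hR : Transcendental K R) (n : ℕ) :
    (ratComp R)^[n] RatFunc.X = (substAlgHom R hR ^ n) RatFunc.X := by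
  induction n with
  | zero => rfl
  | succ n ih =>
    rw [Function.iterate_succ_apply', ih, ← algHom_apply_eq_ratComp, pow_succ, AlgHom.mul_apply,
      substAlgHom_X]

theorem iterate_ratComp_add {R : RatFunc K} (hR : Transcendental K R) (m n : ℕ) :
    (ratComp R)^[m + n] RatFunc.X =
      ratComp ((ratComp R)^[n] RatFunc.X) ((ratComp R)^[m] RatFunc.X) := by
  simp only [iterate_ratComp_X hR]
  rw [pow_add, AlgHom.mul_apply, ← algHom_apply_eq_ratComp]

theorem max_natDegree_eq_one_of_ratComp_eq_X {R S : RatFunc K} (h : ratComp S R = RatFunc.X) :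
    max R.num.natDegree R.denom.natDegree = 1 := by
  have hX : RatFunc.X ∈ IntermediateField.adjoin K {R} :=
    (IntermediateField.mem_adjoin_simple_iff K _).mpr ⟨S.num, S.denom, h.symm⟩
  have htop : IntermediateField.adjoin K {R} = ⊤ := by
    rwa [eq_top_iff, ← RatFunc.adjoin_X, IntermediateField.adjoin_simple_le_iff]
  rw [← RatFunc.finrank_eq_max_natDegree, htop, IntermediateField.finrank_top]

theorem transcendental_of_two_le_max_natDegree {R : RatFunc K}
    (hdeg : 2 ≤ max R.num.natDegree R.denom.natDegree) : Transcendental K R := by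
  refine RatFunc.transcendental_of_ne_C R ?_
  rintro ⟨c, rfl⟩
  simp at hdeg

theorem iterate_ratComp_X_ne_X {R : RatFunc K}
    (hdeg : 2 ≤ max R.num.natDegree R.denom.natDegree) {n : ℕ} (hn : 0 < n) :
    (ratComp R)^[n] RatFunc.X ≠ RatFunc.X := by
  have hR := transcendental_of_two_le_max_natDegree hdeg
  obtain ⟨k, rfl⟩ := Nat.exists_eq_add_of_le hn
  intro h
  have hRX : ratComp R RatFunc.X = R := (algHom_apply_eq_ratComp (AlgHom.id K _) R).symm
  rw [iterate_ratComp_add hR, Function.iterate_one, hRX] at h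
  have := max_natDegree_eq_one_of_ratComp_eq_X h
  omega

end Substitution

section Lipschitz

variable {K : Type*} [Field K] {v : AbsoluteValue K ℝ}

theorem val_sub_le_of_forall_hasValueAt (hna : IsNonarchimedean v)
    (hres : ∀ n : ℕ, 0 < n → v (n : K) = 1) {F : RatFunc K} (hsplit : F.denom.Splits) {f : K → K}
    (hf : ∀ z, v z ≤ 1 → HasValueAt F z (f z)) {M : ℝ} (hM : ∀ z, v z ≤ 1 → v (f z) ≤ M) {x y : K}
    (hx : v x ≤ 1) (hy : v y ≤ 1) : v (f x - f y) ≤ M * v (x - y) := by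
  set γ := F.denom.gaussNorm v 1
  have hden : ∀ z, v z ≤ 1 → v (F.denom.eval z) = γ := fun z hz =>
    val_eval_eq_gaussNorm hna one_pos hsplit (fun w hw => (hf w hw).1) hz
  have hγ : 0 < γ := hden x hx ▸ v.pos (hf x hx).1
  have hnum : F.num.gaussNorm v 1 ≤ M * γ :=
    gaussNorm_le_of_forall_val_le_one hna hres fun z hz => by
      rw [(hf z hz).eval_num, v.map_mul, hden z hz]
      exact mul_le_mul_of_nonneg_right (hM z hz) hγ.le
  have hnumLip : v (F.num.eval x - F.num.eval y) ≤ M * γ * v (x - y) := by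
    have h := mul_val_eval_sub_le hna one_pos F.num hx hy
    rw [one_mul] at h
    exact h.trans (by gcongr)
  have hdenLip : v (f y * (F.denom.eval y - F.denom.eval x)) ≤ M * γ * v (x - y) := by
    have h := mul_val_eval_sub_le hna one_pos F.denom hy hx
    rw [one_mul, v.map_sub y] at h
    rw [v.map_mul, mul_assoc]
    exact mul_le_mul (hM y hy) h (v.nonneg _) ((v.nonneg _).trans (hM y hy))
  have hkey : (f x - f y) * F.denom.eval x =
      F.num.eval x - F.num.eval y + f y * (F.denom.eval y - F.denom.eval x) := by
    rw [(hf x hx).eval_num, (hf y hy).eval_num]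
    ring
  refine le_of_mul_le_mul_right ?_ hγ
  calc v (f x - f y) * γ = v ((f x - f y) * F.denom.eval x) := by rw [v.map_mul, hden x hx]
    _ ≤ M * γ * v (x - y) := hkey ▸ (hna _ _).trans (max_le hnumLip hdenLip)
    _ = M * v (x - y) * γ := by ring

end Lipschitz

section Iteration

variable {A : Type*} [CommRing A] [Nontrivial A] {v : AbsoluteValue A ℝ}
  {s : Set A} {f : A → A} {ε : ℝ}

theorem val_iterate_sub_sub_natCast_mul_le (hna : IsNonarchimedean v) (hε : 0 ≤ ε) (hε1 : ε ≤ 1)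
    (hmaps : Set.MapsTo f s s)
    (hlip : ∀ x ∈ s, ∀ y ∈ s, v (f x - x - (f y - y)) ≤ ε * v (x - y)) {z : A} (hz : z ∈ s)
    (k : ℕ) : v (f^[k] z - z - k * (f z - z)) ≤ ε * v (f z - z) := by
  induction k with
  | zero => simpa using mul_nonneg hε (v.nonneg _)
  | succ k ih =>
    have hk : v (k * (f z - z)) ≤ v (f z - z) := by
      rw [v.map_mul]
      exact mul_le_of_le_one_left (v.nonneg _) hna.apply_natCast_le_one
    have hmove : v (f^[k] z - z) ≤ v (f z - z) := by
      rw [← sub_add_cancel (f^[k] z - z) (k * (f z - z))]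
      exact (hna _ _).trans (max_le (ih.trans (mul_le_of_le_one_left (v.nonneg _) hε1)) hk)
    have hstep : v (f (f^[k] z) - f^[k] z - (f z - z)) ≤ ε * v (f z - z) :=
      (hlip _ (hmaps.iterate k hz) z hz).trans (by gcongr)
    have hsplit : f^[k + 1] z - z - ((k + 1 : ℕ) : A) * (f z - z) =
        f^[k] z - z - k * (f z - z) + (f (f^[k] z) - f^[k] z - (f z - z)) := by
      rw [Function.iterate_succ_apply', Nat.cast_succ]
      ring
    rw [hsplit]
    exact (hna _ _).trans (max_le ih hstep)

theorem val_iterate_sub_eq (hna : IsNonarchimedean v) (hε : 0 ≤ ε) (hε1 : ε < 1)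
    (hmaps : Set.MapsTo f s s)
    (hlip : ∀ x ∈ s, ∀ y ∈ s, v (f x - x - (f y - y)) ≤ ε * v (x - y)) {z : A} (hz : z ∈ s)
    {k : ℕ} (hk : v (k : A) = 1) : v (f^[k] z - z) = v (f z - z) := by
  have herr := val_iterate_sub_sub_natCast_mul_le hna hε hε1.le hmaps hlip hz k
  rcases (v.nonneg (f z - z)).eq_or_lt with hfix | hmove
  · have hfz : f z = z := by rwa [eq_comm, v.eq_zero, sub_eq_zero] at hfix
    rw [Function.iterate_fixed hfz k, hfz]
  · have hmain : v (k * (f z - z)) = v (f z - z) := by rw [v.map_mul, hk, one_mul]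
    have hlt : v (f^[k] z - z - k * (f z - z)) < v (k * (f z - z)) := by
      rw [hmain]
      exact herr.trans_lt (mul_lt_of_lt_one_left hmove hε1)
    rw [← sub_add_cancel (f^[k] z - z) (k * (f z - z)), hna.add_eq_right_of_lt hlt, hmain]

end Iteration

section CloseToId

variable {K : Type*} [Field K] {v : AbsoluteValue K ℝ} {F R : RatFunc K} {ε : ℝ}

/-- The rational function `F` has no pole in the closed unit ball and moves each of its points by at
most `ε`. -/
def IsCloseToId (v : AbsoluteValue K ℝ) (ε : ℝ) (F : RatFunc K) : Prop :=
  ∀ z, v z ≤ 1 → F.denom.eval z ≠ 0 ∧ v (F.eval (RingHom.id K) z - z) ≤ ε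

namespace IsCloseToId

theorem hasValueAt (hF : IsCloseToId v ε F) {z : K} (hz : v z ≤ 1) :
    HasValueAt F z (F.eval (RingHom.id K) z) :=
  ⟨(hF z hz).1, rfl⟩

theorem mapsTo (hF : IsCloseToId v ε F) (hna : IsNonarchimedean v) (hε : ε ≤ 1) :
    Set.MapsTo (fun z => F.eval (RingHom.id K) z) {z | v z ≤ 1} {z | v z ≤ 1} := by
  intro z hz
  have h := hna (F.eval (RingHom.id K) z - z) z
  rw [sub_add_cancel] at h
  exact h.trans (max_le ((hF z hz).2.trans hε) hz)

theorem lipschitz_eval_sub_self [IsAlgClosed K] (hF : IsCloseToId v ε F) (hna : IsNonarchimedean v)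
    (hres : ∀ n : ℕ, 0 < n → v (n : K) = 1) {x y : K} (hx : v x ≤ 1) (hy : v y ≤ 1) :
    v (F.eval (RingHom.id K) x - x - (F.eval (RingHom.id K) y - y)) ≤ ε * v (x - y) :=
  val_sub_le_of_forall_hasValueAt (F := F - RatFunc.X) hna hres (IsAlgClosed.splits _)
    (fun z hz => (hF.hasValueAt hz).sub (hasValueAt_X z)) (fun z hz => (hF z hz).2) hx hy

theorem hasValueAt_iterate {a : ℕ} (ha : IsCloseToId v ε ((ratComp R)^[a] RatFunc.X))
    (hna : IsNonarchimedean v) (hε : ε ≤ 1) (hR : Transcendental K R) {z : K} (hz : v z ≤ 1)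
    (k : ℕ) : HasValueAt ((ratComp R)^[a * k] RatFunc.X) z
      ((fun w => ((ratComp R)^[a] RatFunc.X).eval (RingHom.id K) w)^[k] z) := by
  induction k with
  | zero => exact hasValueAt_X z
  | succ k ih =>
    rw [Nat.mul_succ, iterate_ratComp_add hR, Function.iterate_succ_apply']
    exact ih.ratComp (ha.hasValueAt ((ha.mapsTo hna hε).iterate k hz))

theorem val_iterate_mul_sub_eq [IsAlgClosed K] {a : ℕ}
    (ha : IsCloseToId v ε ((ratComp R)^[a] RatFunc.X)) (hna : IsNonarchimedean v)
    (hres : ∀ n : ℕ, 0 < n → v (n : K) = 1) (hε : ε < 1) (hR : Transcendental K R) {k : ℕ}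
    (hk : 0 < k) {z : K} (hz : v z ≤ 1) :
    v (((ratComp R)^[a * k] RatFunc.X).eval (RingHom.id K) z - z) =
      v (((ratComp R)^[a] RatFunc.X).eval (RingHom.id K) z - z) := by
  have hε0 : 0 ≤ ε := (v.nonneg _).trans (ha z hz).2
  rw [(ha.hasValueAt_iterate hna hε.le hR hz k).2]
  exact val_iterate_sub_eq hna hε0 hε (ha.mapsTo hna hε.le)
    (fun x hx y hy => ha.lipschitz_eval_sub_self hna hres hx hy) hz (hres k hk)

theorem val_iterate_sub_eq_val_iterate_sub [IsAlgClosed K] {a b : ℕ}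
    (ha : IsCloseToId v ε ((ratComp R)^[a] RatFunc.X))
    (hb : IsCloseToId v ε ((ratComp R)^[b] RatFunc.X)) (hna : IsNonarchimedean v)
    (hres : ∀ n : ℕ, 0 < n → v (n : K) = 1) (hε : ε < 1) (hR : Transcendental K R)
    (ha0 : 0 < a) (hb0 : 0 < b) {z : K} (hz : v z ≤ 1) :
    v (((ratComp R)^[a] RatFunc.X).eval (RingHom.id K) z - z) =
      v (((ratComp R)^[b] RatFunc.X).eval (RingHom.id K) z - z) := by
  rw [← ha.val_iterate_mul_sub_eq hna hres hε hR hb0 hz, mul_comm,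
    hb.val_iterate_mul_sub_eq hna hres hε hR ha0 hz]

end IsCloseToId

end CloseToId

theorem stmt_1_general {K : Type*} [Field K] [IsAlgClosed K] (v : AbsoluteValue K ℝ)
    (hna : ∀ x y : K, v (x + y) ≤ max (v x) (v y))
    (hres : ∀ n : ℕ, 0 < n → v (n : K) = 1) (R : RatFunc K)
    (hdeg : 2 ≤ max R.num.natDegree R.denom.natDegree) :
    ∃ δ : ℝ, 0 < δ ∧ ∀ n : ℕ, 0 < n →
      (∀ z : K, v z ≤ 1 → ((ratComp R)^[n] RatFunc.X).denom.eval z ≠ 0) →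
      ∃ z : K, v z ≤ 1 ∧
        δ ≤ v (RatFunc.eval (RingHom.id K) z ((ratComp R)^[n] RatFunc.X) - z) := by
  have hR := transcendental_of_two_le_max_natDegree hdeg
  by_cases hclose : ∃ a, 0 < a ∧ IsCloseToId v (1 / 2) ((ratComp R)^[a] RatFunc.X)
  · obtain ⟨a, ha0, ha⟩ := hclose
    obtain ⟨z₀, hz₀, hne⟩ := exists_val_le_one_and_eval_ne hna hres (fun z hz => (ha z hz).1)
      (iterate_ratComp_X_ne_X hdeg ha0)
    refine ⟨_, v.pos (sub_ne_zero.mpr hne), fun n hn hpole => ?_⟩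
    by_contra! hlt
    have hn' : IsCloseToId v (1 / 2) ((ratComp R)^[n] RatFunc.X) := fun z hz =>
      ⟨hpole z hz, (hlt z hz).le.trans (ha z₀ hz₀).2⟩
    exact (hlt z₀ hz₀).ne
      (hn'.val_iterate_sub_eq_val_iterate_sub ha hna hres one_half_lt_one hR hn ha0 hz₀)
  · refine ⟨1 / 2, one_half_pos, fun n hn hpole => ?_⟩
    by_contra! hlt
    exact hclose ⟨n, hn, fun z hz => ⟨hpole z hz, (hlt z hz).le⟩⟩

/-- Let `(K, v)` be a complete algebraically closed field with a
nontrivial nonarchimedean absolute value of residue characteristic zero, and let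
`R ∈ K(z)` have degree at least `2`.  Then there is no strictly increasing sequence
`(n_j)` of positive integers such that each iterate `R^{n_j}` has no poles in the closed
unit ball `𝒪_K = {z : v z ≤ 1}` and `sup_{z ∈ 𝒪_K} v (R^{n_j}(z) - z) → 0`. -/
theorem stmt_1 {K : Type*} [Field K] [IsAlgClosed K]
    (v : AbsoluteValue K ℝ)
    (hna : ∀ x y : K, v (x + y) ≤ max (v x) (v y))
    (hnontriv : ∃ x : K, x ≠ 0 ∧ v x ≠ 1)
    (hcomplete : ∀ f : ℕ → K,
      (∀ ε : ℝ, 0 < ε → ∃ N : ℕ, ∀ m ≥ N, ∀ n ≥ N, v (f m - f n) < ε) →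
      ∃ L : K, ∀ ε : ℝ, 0 < ε → ∃ N : ℕ, ∀ n ≥ N, v (f n - L) < ε)
    (hres : ∀ n : ℕ, 0 < n → v (n : K) = 1)
    (R : RatFunc K)
    (hdeg : 2 ≤ max R.num.natDegree R.denom.natDegree) :
    ¬ ∃ m : ℕ → ℕ, StrictMono m ∧ (∀ j, 0 < m j) ∧
      (∀ j, ∀ z : K, v z ≤ 1 → ((ratComp R)^[m j] RatFunc.X).denom.eval z ≠ 0) ∧
      (∀ ε : ℝ, 0 < ε → ∃ J : ℕ, ∀ j ≥ J, ∀ z : K, v z ≤ 1 →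
        v (RatFunc.eval (RingHom.id K) z ((ratComp R)^[m j] RatFunc.X) - z) < ε) := by
  rintro ⟨m, -, hpos, hpole, hconv⟩
  obtain ⟨δ, hδ, hfar⟩ := stmt_1_general v hna hres R hdeg
  obtain ⟨J, hJ⟩ := hconv δ hδ
  obtain ⟨z, hz, hle⟩ := hfar (m J) (hpos J) (hpole J)
  exact hle.not_gt (hJ J le_rfl z hz)
end

section
/- Let K be a field equipped with a nonarchimedean absolute value |·|, with respect to which K is complete and algebraically closed, and let 𝔪_K = {z ∈ K : |z| < 1} be the open unit ball. Let T ∈ K(z) be a rational function having no poles and no zeros in 𝔪_K and satisfying sup_{z ∈ 𝔪_K} |T(z)| < 1. Then there exists a ∈ K with 0 < |a| < 1 such that |T(z) − a| < |a| for every z ∈ 𝔪_K; that is, the image T(𝔪_K) is contained in an open ball centered at a nonzero point a and of radius |a|. -/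
open Polynomial

/-!
For `a ≠ 0`, the inequality `v (x - a) < v a` says that `x / a` is a one-unit, an element of the
multiplicative group `1 + 𝔪`. If `v z < 1` and the root of a linear factor `X - α` lies outside the
open unit ball, then `v ((z - α) - (0 - α)) = v z < v α`, so the values of `X - α` at `z` and at `0`
differ by a one-unit. Multiplying over the linear factors of the numerator and dividing by those
of the denominator gives `v (T z - T 0) < v (T 0)`, so `a = T 0` is a suitable center.
-/

section OneUnits

variable {Γ₀ : Type*} [LinearOrderedCommGroupWithZero Γ₀]

lemma valuation_mul_sub_mul_lt {R : Type*} [Ring R] (v : Valuation R Γ₀) {x a y b : R}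
    (hx : v (x - a) < v a) (hy : v (y - b) < v b) : v (x * y - a * b) < v (a * b) := by
  have ha : 0 < v a := zero_le.trans_lt hx
  have hb : 0 < v b := zero_le.trans_lt hy
  rw [show x * y - a * b = (x - a) * y + a * (y - b) by noncomm_ring]
  apply v.map_add_lt
  · rw [v.map_mul, v.map_mul, v.map_eq_of_sub_lt hy]
    exact mul_lt_mul_of_pos_right hx hb
  · rw [v.map_mul, v.map_mul]
    exact mul_lt_mul_of_pos_left hy ha

lemma valuation_inv_sub_inv_lt {K : Type*} [DivisionRing K] (v : Valuation K Γ₀) {y b : K}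
    (hy : v (y - b) < v b) : v (y⁻¹ - b⁻¹) < v b⁻¹ := by
  have hvy : v y = v b := v.map_eq_of_sub_lt hy
  have hb : 0 < v b := zero_le.trans_lt hy
  have hb0 : b ≠ 0 := v.pos_iff.mp hb
  have hy0 : y ≠ 0 := v.pos_iff.mp (hvy ▸ hb)
  have hinv : 0 < (v b)⁻¹ := inv_pos.mpr hb
  calc v (y⁻¹ - b⁻¹) = (v b)⁻¹ * v (y - b) * (v b)⁻¹ := by
        rw [inv_sub_inv' hy0 hb0, v.map_mul, v.map_mul, map_inv₀, map_inv₀, hvy, v.map_sub_swap]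
    _ < (v b)⁻¹ * v b * (v b)⁻¹ := by gcongr
    _ = v b⁻¹ := by rw [inv_mul_cancel₀ hb.ne', one_mul, map_inv₀]

lemma valuation_div_sub_div_lt {K : Type*} [DivisionRing K] (v : Valuation K Γ₀) {x a y b : K}
    (hx : v (x - a) < v a) (hy : v (y - b) < v b) : v (x / y - a / b) < v (a / b) := by
  simpa only [div_eq_mul_inv] using valuation_mul_sub_mul_lt v hx (valuation_inv_sub_inv_lt v hy)

lemma valuation_multiset_prod_sub_prod_lt {R ι : Type*} [CommRing R] (v : Valuation R Γ₀)
    {f g : ι → R} {s : Multiset ι} (h : ∀ i ∈ s, v (f i - g i) < v (g i)) :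
    v ((s.map f).prod - (s.map g).prod) < v (s.map g).prod := by
  induction s using Multiset.induction_on with
  | empty => simp
  | cons i s ih =>
    simp only [Multiset.map_cons, Multiset.prod_cons]
    exact valuation_mul_sub_mul_lt v (h i (Multiset.mem_cons_self i s))
      (ih fun j hj => h j (Multiset.mem_cons_of_mem hj))

variable {K : Type*} [Field K] (v : Valuation K Γ₀)

lemma valuation_eval_sub_eval_lt {p : K[X]} (hp : p.Splits) (hp0 : p ≠ 0) {c z : K}
    (hroots : ∀ α ∈ p.roots, v (z - c) < v (c - α)) :
    v (p.eval z - p.eval c) < v (p.eval c) := by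
  have hlead : v (p.leadingCoeff - p.leadingCoeff) < v p.leadingCoeff := by
    simpa [v.pos_iff] using hp0
  rw [hp.eval_eq_prod_roots, hp.eval_eq_prod_roots]
  exact valuation_mul_sub_mul_lt v hlead
    (valuation_multiset_prod_sub_prod_lt v fun α hα => by simpa using hroots α hα)

lemma valuation_eval_sub_eval_zero_lt {p : K[X]} (hp : p.Splits)
    (hne : ∀ z : K, v z < 1 → p.eval z ≠ 0) {z : K} (hz : v z < 1) :
    v (p.eval z - p.eval 0) < v (p.eval 0) := by
  have hp0 : p ≠ 0 := by
    rintro rfl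
    exact hne z hz eval_zero
  refine valuation_eval_sub_eval_lt v hp hp0 fun α hα => ?_
  have hα : 1 ≤ v α := not_lt.mp fun hlt => hne α hlt (isRoot_of_mem_roots hα)
  simpa using hz.trans_le hα

end OneUnits

/-- A real nonarchimedean absolute value, regarded as a valuation with values in `NNReal`, so that
the results on valuations apply to it. -/
noncomputable def nonarchimedeanValuation {K : Type*} [Field K] (v : AbsoluteValue K ℝ)
    (hna : IsNonarchimedean v) : Valuation K NNReal :=
  letI := v.toNormedField
  haveI := IsUltrametricDist.isUltrametricDist_of_isNonarchimedean_norm hna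
  NormedField.valuation

theorem stmt_2_general {K Γ₀ : Type*} [Field K] [LinearOrderedCommGroupWithZero Γ₀]
    (v : Valuation K Γ₀) (T : RatFunc K) (hnum : T.num.Splits) (hdenom : T.denom.Splits)
    (hpole : ∀ z : K, v z < 1 → T.denom.eval z ≠ 0)
    (hzero : ∀ z : K, v z < 1 → T.num.eval z ≠ 0)
    (hT : v (RatFunc.eval (RingHom.id K) 0 T) < 1) :
    ∃ a : K, 0 < v a ∧ v a < 1 ∧ ∀ z : K, v z < 1 →
      v (RatFunc.eval (RingHom.id K) z T - a) < v a := by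
  have hball : ∀ z : K, v z < 1 →
      v (RatFunc.eval (RingHom.id K) z T - RatFunc.eval (RingHom.id K) 0 T) <
        v (RatFunc.eval (RingHom.id K) 0 T) := fun z hz => by
    simpa only [RatFunc.eval, eval₂_id] using
      valuation_div_sub_div_lt v (valuation_eval_sub_eval_zero_lt v hnum hzero hz)
        (valuation_eval_sub_eval_zero_lt v hdenom hpole hz)
  exact ⟨_, zero_le.trans_lt (hball 0 (by simp)), hT, hball⟩

/-- Let `(K, v)` be a complete algebraically closed field with a
nonarchimedean absolute value and let `𝔪_K = {z : v z < 1}`.  If `T ∈ K(z)` has no poles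
and no zeros in `𝔪_K` and `sup_{z ∈ 𝔪_K} v (T z) < 1`, then there is `a ∈ K` with
`0 < v a < 1` and `v (T z - a) < v a` for all `z ∈ 𝔪_K`. -/
theorem stmt_2 {K : Type*} [Field K] [IsAlgClosed K]
    (v : AbsoluteValue K ℝ)
    (hna : ∀ x y : K, v (x + y) ≤ max (v x) (v y))
    (hcomplete : ∀ f : ℕ → K,
      (∀ ε : ℝ, 0 < ε → ∃ N : ℕ, ∀ m ≥ N, ∀ n ≥ N, v (f m - f n) < ε) →
      ∃ L : K, ∀ ε : ℝ, 0 < ε → ∃ N : ℕ, ∀ n ≥ N, v (f n - L) < ε)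
    (T : RatFunc K)
    (hpole : ∀ z : K, v z < 1 → T.denom.eval z ≠ 0)
    (hzero : ∀ z : K, v z < 1 → T.num.eval z ≠ 0)
    (hsup : ∃ c : ℝ, c < 1 ∧ ∀ z : K, v z < 1 →
      v (RatFunc.eval (RingHom.id K) z T) ≤ c) :
    ∃ a : K, 0 < v a ∧ v a < 1 ∧ ∀ z : K, v z < 1 →
      v (RatFunc.eval (RingHom.id K) z T - a) < v a := by
  obtain ⟨c, hc, hT⟩ := hsup
  exact stmt_2_general (nonarchimedeanValuation v hna) T (IsAlgClosed.splits _)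
    (IsAlgClosed.splits _) hpole hzero ((hT 0 (by simp)).trans_lt hc)
end

section
/- Let K be an algebraically closed field equipped with a nonarchimedean absolute value |·|, let P ∈ K[z] be a nonconstant polynomial, let z₀ ∈ K and let r > 0 be a real number. Write the Taylor expansion of P at z₀ as P(z₀ + h) = ∑_{j≥0} c_j h^j. Then the image of the closed ball {z ∈ K : |z − z₀| ≤ r} under P is exactly the closed ball {w ∈ K : |w − P(z₀)| ≤ s}, where s = max_{1 ≤ j ≤ deg P} |c_j| r^j. -/
open Polynomial

/-!
The inclusion of the image in the ball is the ultrametric inequality applied to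
`P(z₀ + h) - P(z₀) = ∑_{j ≥ 1} c_j h^j`.

Conversely, let `|w - P(z₀)| ≤ s` and put `Q(h) = P(z₀ + h) - w`. If every root `a` of `Q`
satisfied `r < |a|`, the constant coefficient of each factor `X - a` would strictly dominate the
other one on the ball of radius `r`. Strict dominance is multiplicative, so `|c_j| r^j < |Q(0)|`
for all `j ≥ 1`, that is, `s < |P(z₀) - w|`, a contradiction.
-/

section

variable {R S : Type*} [CommRing R] [CommRing S] [LinearOrder S]
  {v : AbsoluteValue R S} {r s : S}

/-- The constant coefficient of `Q` is, for the absolute value `v`, strictly larger than every other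
term of `Q` on the ball of radius `r`: the Newton polygon condition under which `Q` has no root in
that ball. The zero polynomial does not satisfy it. -/
def ConstCoeffDominates (v : AbsoluteValue R S) (r : S) (Q : R[X]) : Prop :=
  ∀ j ≠ 0, v (Q.coeff j) * r ^ j < v (Q.coeff 0)

namespace ConstCoeffDominates

variable {f g : R[X]}

lemma coeff_mul_pow_le (hf : ConstCoeffDominates v r f) (j : ℕ) :
    v (f.coeff j) * r ^ j ≤ v (f.coeff 0) := by
  rcases eq_or_ne j 0 with rfl | hj
  · simp
  · exact (hf j hj).le

lemma of_C {c : R} (hc : c ≠ 0) : ConstCoeffDominates v r (C c) := fun j hj => by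
  simpa [coeff_C_of_ne_zero hj] using v.pos hc

variable [IsStrictOrderedRing S]

lemma coeff_zero_pos (hf : ConstCoeffDominates v r f) (hr : 0 ≤ r) : 0 < v (f.coeff 0) :=
  (mul_nonneg (v.nonneg _) (pow_nonneg hr 1)).trans_lt (hf 1 one_ne_zero)

lemma of_X_sub_C [Nontrivial R] {a : R} (hr : 0 ≤ r) (ha : r < v a) :
    ConstCoeffDominates v r (X - C a) := by
  rintro (_ | _ | j) hj
  · exact absurd rfl hj
  · simpa [coeff_X, coeff_C] using ha
  · simpa [coeff_X, coeff_C] using hr.trans_lt ha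

lemma mul (hna : IsNonarchimedean v) (hr : 0 ≤ r) (hf : ConstCoeffDominates v r f)
    (hg : ConstCoeffDominates v r g) : ConstCoeffDominates v r (f * g) := by
  intro k hk
  obtain ⟨⟨i, j⟩, hij, hle⟩ := hna.finset_image_add_of_nonempty
    (fun p : ℕ × ℕ => f.coeff p.1 * g.coeff p.2) (Finset.HasAntidiagonal.nonempty_antidiagonal k)
  obtain rfl : i + j = k := Finset.HasAntidiagonal.mem_antidiagonal.mp hij
  have hterm : (v (f.coeff i) * r ^ i) * (v (g.coeff j) * r ^ j)
      < v (f.coeff 0) * v (g.coeff 0) := by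
    rcases eq_or_ne i 0 with rfl | hi
    · exact mul_lt_mul' (hf.coeff_mul_pow_le 0) (hg j (by simpa using hk)) (by positivity)
        (hf.coeff_zero_pos hr)
    · exact mul_lt_mul_of_lt_of_le_of_nonneg_of_pos (hf i hi) (hg.coeff_mul_pow_le j)
        (by positivity) (hg.coeff_zero_pos hr)
  calc v ((f * g).coeff (i + j)) * r ^ (i + j)
      ≤ v (f.coeff i * g.coeff j) * r ^ (i + j) := by
        rw [coeff_mul]; gcongr
    _ = (v (f.coeff i) * r ^ i) * (v (g.coeff j) * r ^ j) := by rw [v.map_mul]; ring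
    _ < v ((f * g).coeff 0) := by rwa [mul_coeff_zero, v.map_mul]

lemma of_splits [IsDomain R] (hna : IsNonarchimedean v) (hr : 0 ≤ r) (hf : f.Splits) (hf0 : f ≠ 0)
    (hroots : ∀ a, f.IsRoot a → r < v a) : ConstCoeffDominates v r f := by
  rw [hf.eq_prod_roots]
  refine (of_C (leadingCoeff_ne_zero.mpr hf0)).mul hna hr <|
    Multiset.prod_induction _ _ (fun _ _ => mul hna hr) (of_C one_ne_zero) fun q hq => ?_
  obtain ⟨a, ha, rfl⟩ := Multiset.mem_map.mp hq
  exact of_X_sub_C hr (hroots a (isRoot_of_mem_roots ha))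

end ConstCoeffDominates

variable [IsStrictOrderedRing S]

lemma exists_isRoot_abv_le_of_splits [IsDomain R] (hna : IsNonarchimedean v) (hr : 0 ≤ r)
    {Q : R[X]} (hQ : Q.Splits) {j : ℕ} (hj : j ≠ 0)
    (hle : v (Q.coeff 0) ≤ v (Q.coeff j) * r ^ j) : ∃ a, Q.IsRoot a ∧ v a ≤ r := by
  rcases eq_or_ne Q 0 with rfl | hQ0
  · exact ⟨0, by simp, by simpa using hr⟩
  · by_contra! hroots
    exact (ConstCoeffDominates.of_splits hna hr hQ hQ0 hroots j hj).not_ge hle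

lemma abv_eval_sub_coeff_zero_le [Nontrivial R] (hna : IsNonarchimedean v) {Q : R[X]} {h : R}
    (hh : v h ≤ r) (hs0 : 0 ≤ s) (hs : ∀ j ∈ Set.Icc 1 Q.natDegree, v (Q.coeff j) * r ^ j ≤ s) :
    v (Q.eval h - Q.coeff 0) ≤ s := by
  have hexpand : Q.eval h - Q.coeff 0
      = ∑ j ∈ Finset.range Q.natDegree, Q.coeff (j + 1) * h ^ (j + 1) := by
    rw [eval_eq_sum_range, Finset.sum_range_succ', pow_zero, mul_one, add_sub_cancel_right]
  rw [hexpand]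
  refine Finset.sum_induction _ (v · ≤ s) (fun x y hx hy => (hna x y).trans (max_le hx hy))
    (by simpa using hs0) fun j hj => ?_
  calc v (Q.coeff (j + 1) * h ^ (j + 1))
      = v (Q.coeff (j + 1)) * v h ^ (j + 1) := by rw [v.map_mul, v.map_pow]
    _ ≤ v (Q.coeff (j + 1)) * r ^ (j + 1) := by gcongr
    _ ≤ s := hs (j + 1) ⟨j.succ_pos, Finset.mem_range.mp hj⟩

theorem stmt_6_general [IsDomain R] (hna : IsNonarchimedean v) {P : R[X]}
    (hP : ∀ w, (P - C w).Splits) (z₀ : R) (hr : 0 ≤ r)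
    (hs : IsGreatest ((fun j : ℕ => v ((taylor z₀ P).coeff j) * r ^ j) ''
      Set.Icc 1 P.natDegree) s) :
    (fun z : R => P.eval z) '' {z : R | v (z - z₀) ≤ r} = {w : R | v (w - P.eval z₀) ≤ s} := by
  obtain ⟨⟨m, ⟨hm, -⟩, rfl⟩, hub⟩ := hs
  apply Set.Subset.antisymm
  · rintro _ ⟨z, hz, rfl⟩
    have hle := abv_eval_sub_coeff_zero_le hna (Q := taylor z₀ P) hz (by positivity)
      fun j hj => hub ⟨j, by simpa using hj, rfl⟩
    simpa [taylor_eval] using hle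
  · intro w hw
    have hm0 : m ≠ 0 := by lia
    obtain ⟨a, ha, har⟩ := exists_isRoot_abv_le_of_splits hna hr ((hP w).taylor z₀) hm0 <| by
      simpa [taylor_coeff_zero, coeff_C_of_ne_zero hm0, v.map_sub (P.eval z₀) w] using hw
    exact ⟨a + z₀, by simpa using har, by simpa [taylor_eval, sub_eq_zero] using ha⟩

end

/-- Let `K` be an algebraically closed field with a nonarchimedean
absolute value `v`, `P` a nonconstant polynomial, `z₀ ∈ K`, `r > 0`, and let
`s = max_{1 ≤ j ≤ deg P} v c_j * r ^ j` where the `c_j` are the Taylor coefficients of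
`P` at `z₀`.  Then the image under `P` of the closed ball `{z : v (z - z₀) ≤ r}` is
exactly the closed ball `{w : v (w - P z₀) ≤ s}`. -/
theorem stmt_6 {K : Type*} [Field K] [IsAlgClosed K]
    (v : AbsoluteValue K ℝ)
    (hna : ∀ x y : K, v (x + y) ≤ max (v x) (v y))
    (P : Polynomial K) (hP : 1 ≤ P.natDegree)
    (z₀ : K) (r : ℝ) (hr : 0 < r) (s : ℝ)
    (hs : IsGreatest ((fun j : ℕ => v ((Polynomial.taylor z₀ P).coeff j) * r ^ j) ''
      Set.Icc 1 P.natDegree) s) :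
    (fun z : K => P.eval z) '' {z : K | v (z - z₀) ≤ r}
      = {w : K | v (w - P.eval z₀) ≤ s} :=
  stmt_6_general hna (fun w => IsAlgClosed.splits (P - C w)) z₀ hr.le hs
end

section
/- Let K be a field equipped with a nonarchimedean absolute value |·| and let R ∈ K(z) be a rational function. Let z₀ ∈ K be a point which is not a pole of R and such that R′(z₀) ≠ 0. Then there exists δ > 0 such that for all z, w ∈ K with |z − z₀| ≤ δ and |w − z₀| ≤ δ, the function R is defined at z and at w and |R(z) − R(w)| = |R′(z₀)| · |z − w|. -/
open Polynomial

/-- The formal derivative of a rational function, via the quotient rule on the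
numerator/denominator in lowest terms. -/
noncomputable def ratDeriv {K : Type*} [Field K] (R : RatFunc K) : RatFunc K :=
  RatFunc.mk (Polynomial.derivative R.num * R.denom - R.num * Polynomial.derivative R.denom)
    (R.denom ^ 2)

/-!
If `v` is trivial, small balls are singletons. Otherwise `v` makes `K` a nontrivially normed field,
over which `R` is strictly differentiable at `z₀` with derivative `R′(z₀) ≠ 0`. Thus
`R(z) - R(w)` and `(z - w) R′(z₀)` are asymptotically equivalent as `z, w → z₀`, and in an
ultrametric group asymptotically equivalent functions eventually have the same norm.
-/

open Asymptotics Filter IsUltrametricDist Topology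

universe u

section Evaluation

variable {K L : Type u} [Field K] [Field L] (f : K →+* L) {a : L}

lemma ratFunc_eval_div (p : K[X]) {q : K[X]} (hq : q.eval₂ f a ≠ 0) :
    RatFunc.eval f a (algebraMap K[X] (RatFunc K) p / algebraMap K[X] (RatFunc K) q) =
      p.eval₂ f a / q.eval₂ f a := by
  have hq₀ : q ≠ 0 := by
    rintro rfl
    exact hq (eval₂_zero f a)
  have hdenom := mt (eval₂_eq_zero_of_dvd_of_eval₂_eq_zero f a (RatFunc.denom_div_dvd p q)) hq
  rw [RatFunc.eval, div_eq_div_iff hdenom hq, ← eval₂_mul, ← eval₂_mul,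
    (RatFunc.num_mul_eq_mul_denom_iff hq₀).mpr rfl]

lemma ratFunc_eval_ratDeriv (R : RatFunc K) (ha : R.denom.eval₂ f a ≠ 0) :
    RatFunc.eval f a (ratDeriv R) =
      (R.num.derivative.eval₂ f a * R.denom.eval₂ f a -
        R.num.eval₂ f a * R.denom.derivative.eval₂ f a) / R.denom.eval₂ f a ^ 2 := by
  have hsq : (R.denom ^ 2).eval₂ f a ≠ 0 := by
    rw [eval₂_pow]
    exact pow_ne_zero 2 ha
  rw [ratDeriv, RatFunc.mk_eq_div, ratFunc_eval_div f _ hsq, eval₂_sub, eval₂_mul, eval₂_mul,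
    eval₂_pow]

end Evaluation

lemma hasStrictDerivAt_ratFunc_eval {K 𝕜 : Type u} [Field K] [NontriviallyNormedField 𝕜]
    (f : K →+* 𝕜) (R : RatFunc K) {a : 𝕜} (ha : R.denom.eval₂ f a ≠ 0) :
    HasStrictDerivAt (fun z ↦ RatFunc.eval f z R) (RatFunc.eval f a (ratDeriv R)) a := by
  have hpoly (p : K[X]) : HasStrictDerivAt (fun z ↦ p.eval₂ f z) (p.derivative.eval₂ f a) a := by
    simpa only [eval₂_eq_eval_map, derivative_map] using (p.map f).hasStrictDerivAt a
  rw [ratFunc_eval_ratDeriv f R ha]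
  exact (hpoly R.num).fun_div (hpoly R.denom) ha

lemma eventually_norm_eq_of_isEquivalent {α E : Type*} [NormedAddCommGroup E]
    [IsUltrametricDist E] {l : Filter α} {u v : α → E} (huv : u ~[l] v) :
    ∀ᶠ x in l, ‖u x‖ = ‖v x‖ := by
  filter_upwards [huv.isLittleO.def one_half_pos] with x hx
  rcases eq_or_ne (v x) 0 with hv | hv
  · simpa [hv] using hx
  · have hlt : ‖u x + -v x‖ < ‖-v x‖ := by
      rw [← sub_eq_add_neg, norm_neg]
      exact hx.trans_lt (by linarith [norm_pos_iff.mpr hv])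
    rw [norm_eq_of_add_norm_lt_max (hlt.trans_le (le_max_right ..)), norm_neg]

lemma eventually_norm_sub_eq_of_hasDerivAtFilter {𝕜 F : Type*} [NontriviallyNormedField 𝕜]
    [NormedAddCommGroup F] [NormedSpace 𝕜 F] [IsUltrametricDist F] {f : 𝕜 → F} {f' : F}
    {L : Filter (𝕜 × 𝕜)} (hf : HasDerivAtFilter f f' L) (hf' : f' ≠ 0) :
    ∀ᶠ p in L, ‖f p.1 - f p.2‖ = ‖f'‖ * ‖p.1 - p.2‖ := by
  simpa only [norm_smul, mul_comm ‖f'‖] using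
    eventually_norm_eq_of_isEquivalent (hf.isEquivalent_sub hf')

lemma exists_forall_norm_ratFunc_eval_sub_eq {K 𝕜 : Type u} [Field K] [NontriviallyNormedField 𝕜]
    [IsUltrametricDist 𝕜] (f : K →+* 𝕜) (R : RatFunc K) {a : 𝕜} (ha : R.denom.eval₂ f a ≠ 0)
    (hderiv : RatFunc.eval f a (ratDeriv R) ≠ 0) :
    ∃ δ > 0, ∀ z w : 𝕜, ‖z - a‖ ≤ δ → ‖w - a‖ ≤ δ →
      R.denom.eval₂ f z ≠ 0 ∧ R.denom.eval₂ f w ≠ 0 ∧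
      ‖RatFunc.eval f z R - RatFunc.eval f w R‖ =
        ‖RatFunc.eval f a (ratDeriv R)‖ * ‖z - w‖ := by
  have hdenom : ∀ᶠ z in 𝓝 a, R.denom.eval₂ f z ≠ 0 :=
    (R.denom.continuous_eval₂ f).continuousAt.eventually_ne ha
  have hnorm : ∀ᶠ p in 𝓝 a ×ˢ 𝓝 a, ‖RatFunc.eval f p.1 R - RatFunc.eval f p.2 R‖ =
      ‖RatFunc.eval f a (ratDeriv R)‖ * ‖p.1 - p.2‖ := by
    rw [← nhds_prod_eq]
    exact eventually_norm_sub_eq_of_hasDerivAtFilter (hasStrictDerivAt_ratFunc_eval f R ha) hderiv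
  obtain ⟨δ, hδ, h⟩ := Metric.nhds_basis_closedBall.prod_self.eventually_iff.mp
    ((hdenom.prod_inl (𝓝 a)).and ((hdenom.prod_inr (𝓝 a)).and hnorm))
  refine ⟨δ, hδ, fun z w hz hw ↦ h (x := (z, w)) ⟨?_, ?_⟩⟩
  · exact mem_closedBall_iff_norm.mpr hz
  · exact mem_closedBall_iff_norm.mpr hw

/-- Let `(K, v)` be a field with a nonarchimedean absolute value,
`R ∈ K(z)`, and `z₀ ∈ K` not a pole of `R` with `R′(z₀) ≠ 0`.  Then there is `δ > 0`
such that for all `z, w` in the closed ball of radius `δ` around `z₀`, `R` is defined at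
`z` and `w` and `v (R z - R w) = v (R′ z₀) * v (z - w)`. -/
theorem stmt_7 {K : Type*} [Field K]
    (v : AbsoluteValue K ℝ)
    (hna : ∀ x y : K, v (x + y) ≤ max (v x) (v y))
    (R : RatFunc K) (z₀ : K)
    (hpole : R.denom.eval z₀ ≠ 0)
    (hderiv : RatFunc.eval (RingHom.id K) z₀ (ratDeriv R) ≠ 0) :
    ∃ δ : ℝ, 0 < δ ∧ ∀ z w : K, v (z - z₀) ≤ δ → v (w - z₀) ≤ δ →
      R.denom.eval z ≠ 0 ∧ R.denom.eval w ≠ 0 ∧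
      v (RatFunc.eval (RingHom.id K) z R - RatFunc.eval (RingHom.id K) w R)
        = v (RatFunc.eval (RingHom.id K) z₀ (ratDeriv R)) * v (z - w) := by
  by_cases hv : v.IsNontrivial
  · let _ : NontriviallyNormedField K :=
      { v.toNormedField with non_trivial := hv.exists_abv_gt_one }
    have _ : IsUltrametricDist K := isUltrametricDist_of_forall_norm_add_le_max_norm hna
    exact exists_forall_norm_ratFunc_eval_sub_eq (RingHom.id K) R hpole hderiv
  · have heq (z : K) (hz : v (z - z₀) ≤ 1 / 2) : z = z₀ := by
      by_contra hne
      have hone : v (z - z₀) = 1 := AbsoluteValue.not_isNontrivial_apply hv (sub_ne_zero.mpr hne)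
      linarith
    refine ⟨1 / 2, one_half_pos, fun z w hz hw ↦ ?_⟩
    rw [heq z hz, heq w hw]
    exact ⟨hpole, hpole, by simp⟩
end

section
/- Let p be a prime number and let K be a field of characteristic 0 equipped with a nonarchimedean absolute value |·| whose restriction to ℚ is the p-adic absolute value (so |p| = 1/p and |m| = 1 for every integer m coprime to p). Let P(z) = p^{-1}(z^p − z^{p²}). Then for all z, w ∈ K with p^{-1/(p−1)} < |z| < 1 and |w| ≤ 1, one has |P(z + w) − P(w)| = p · |z|^p. -/
/-!
Write `D x y = (x + y) ^ p - y ^ p`. On the closed unit ball of `v` the mixed terms of the binomial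
expansion are divisible by `p * x * y`, so `D x y` differs from `x ^ p` by an element of absolute
value at most `v p * v x`. The lower bound on `v z` says exactly that `v p * v z < v z ^ p`, whence
`A = D z w` satisfies `v A = v z ^ p < 1`. In turn `(z + w) ^ p ^ 2 - w ^ p ^ 2 = D A (w ^ p)` is
strictly smaller than `A`, so it does not affect the absolute value of
`p * (P (z + w) - P w) = A - D A (w ^ p)`.
-/

section IsNonarchimedean

variable {R S : Type*} [CommRing R] [Nontrivial R]
  [CommRing S] [LinearOrder S] [IsStrictOrderedRing S] {v : AbsoluteValue R S}

/-- The closed unit ball of a nonarchimedean absolute value, as a subring. It lets identities with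
integral coefficients be turned into bounds on absolute values. -/
def unitBallSubring (hv : IsNonarchimedean v) : Subring R where
  carrier := {a | v a ≤ 1}
  mul_mem' ha hb := by simpa only [Set.mem_ofPred_eq, map_mul] using mul_le_one₀ ha (v.nonneg _) hb
  one_mem' := (map_one v).le
  add_mem' ha hb := (hv _ _).trans (max_le ha hb)
  zero_mem' := by simp
  neg_mem' ha := by simpa using ha

variable {p : ℕ} {x y : R}

lemma abv_add_pow_prime_sub_sub_le (hv : IsNonarchimedean v) (hp : p.Prime)
    (hx : v x ≤ 1) (hy : v y ≤ 1) : v ((x + y) ^ p - y ^ p - x ^ p) ≤ v p * v x := by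
  obtain ⟨⟨r, hr⟩, hxyr⟩ := exists_add_pow_prime_eq hp (⟨x, hx⟩ : unitBallSubring hv) ⟨y, hy⟩
  have expansion : (x + y) ^ p = x ^ p + y ^ p + p * x * y * r := by
    simpa using congrArg Subtype.val hxyr
  calc v ((x + y) ^ p - y ^ p - x ^ p)
    _ = v p * v x * (v y * v r) := by
      simp only [← map_mul]
      congr 1
      linear_combination expansion
    _ ≤ v p * v x := mul_le_of_le_one_right (by positivity) (mul_le_one₀ hy (v.nonneg r) hr)

lemma abv_add_pow_prime_sub_eq_pow (hv : IsNonarchimedean v) (hp : p.Prime)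
    (hpx : v p * v x < v x ^ p) (hx : v x ≤ 1) (hy : v y ≤ 1) :
    v ((x + y) ^ p - y ^ p) = v x ^ p := by
  have error_lt : v ((x + y) ^ p - y ^ p - x ^ p) < v (x ^ p) := by
    rw [map_pow]
    exact (abv_add_pow_prime_sub_sub_le hv hp hx hy).trans_lt hpx
  rw [← map_pow, ← hv.add_eq_left_of_lt error_lt, add_sub_cancel]

lemma abv_add_pow_prime_sub_lt (hv : IsNonarchimedean v) (hp : p.Prime) (hvp : v p < 1)
    (hx₀ : 0 < v x) (hx₁ : v x < 1) (hy : v y ≤ 1) : v ((x + y) ^ p - y ^ p) < v x := by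
  have pow_lt : v (x ^ p) < v x := by
    rw [map_pow]
    exact pow_lt_self_of_lt_one₀ hx₀ hx₁ hp.one_lt
  have error_lt : v ((x + y) ^ p - y ^ p - x ^ p) < v x :=
    (abv_add_pow_prime_sub_sub_le hv hp hx₁.le hy).trans_lt (mul_lt_of_lt_one_left hx₀ hvp)
  calc v ((x + y) ^ p - y ^ p)
    _ = v (x ^ p + ((x + y) ^ p - y ^ p - x ^ p)) := by rw [add_sub_cancel]
    _ ≤ max (v (x ^ p)) (v ((x + y) ^ p - y ^ p - x ^ p)) := hv _ _
    _ < v x := max_lt pow_lt error_lt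

theorem abv_pow_prime_sub_pow_sq_sub_eq (hv : IsNonarchimedean v) (hp : p.Prime)
    (hpx : v p * v x < v x ^ p) (hx : v x < 1) (hy : v y ≤ 1) :
    v ((x + y) ^ p - (x + y) ^ p ^ 2 - (y ^ p - y ^ p ^ 2)) = v x ^ p := by
  have p_lt_one : v p < 1 := by
    refine lt_of_mul_lt_mul_right (hpx.trans_le ?_) (v.nonneg x)
    simpa only [one_mul] using pow_le_of_le_one (v.nonneg x) hx.le hp.ne_zero
  have yp_le_one : v (y ^ p) ≤ 1 := (unitBallSubring hv).pow_mem hy p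
  set A := (x + y) ^ p - y ^ p with hA
  have abv_A : v A = v x ^ p := abv_add_pow_prime_sub_eq_pow hv hp hpx hx.le hy
  have A_pos : 0 < v A := by
    rw [abv_A]
    exact (mul_nonneg (v.nonneg _) (v.nonneg _)).trans_lt hpx
  have A_lt_one : v A < 1 := by
    rw [abv_A]
    exact pow_lt_one₀ (v.nonneg x) hx hp.ne_zero
  have iterate_lt : v (-((A + y ^ p) ^ p - (y ^ p) ^ p)) < v A := by
    rw [map_neg_eq_map]
    exact abv_add_pow_prime_sub_lt hv hp p_lt_one A_pos A_lt_one yp_le_one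
  have decomposition : (x + y) ^ p - (x + y) ^ p ^ 2 - (y ^ p - y ^ p ^ 2)
      = A + -((A + y ^ p) ^ p - (y ^ p) ^ p) := by
    rw [hA, sub_add_cancel]
    ring
  rw [decomposition, hv.add_eq_left_of_lt iterate_lt, abv_A]

end IsNonarchimedean

lemma inv_lt_pow_of_rpow_neg_one_div_lt {a x : ℝ} {n : ℕ} (ha : 0 ≤ a) (hn : n ≠ 0)
    (h : a ^ (-1 / (n : ℝ)) < x) : a⁻¹ < x ^ n :=
  calc
    a⁻¹ = (a ^ (-1 / (n : ℝ))) ^ n := by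
        rw [← Real.rpow_mul_natCast ha, div_mul_cancel₀ _ (Nat.cast_ne_zero.mpr hn),
          Real.rpow_neg_one]
    _ < x ^ n := pow_lt_pow_left₀ h (Real.rpow_nonneg ha _) hn

/-- Let `p` be prime and `K` a characteristic-zero field with a
nonarchimedean absolute value restricting to the `p`-adic absolute value on `ℚ`.
Let `P z = p⁻¹ (z ^ p - z ^ p²)`.  If `p ^ (-1/(p-1)) < v z < 1` and `v w ≤ 1`, then
`v (P (z + w) - P w) = p * (v z) ^ p`. -/
theorem stmt_8 (p : ℕ) (hp : p.Prime) {K : Type*} [Field K] [CharZero K]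
    (v : AbsoluteValue K ℝ)
    (hna : ∀ x y : K, v (x + y) ≤ max (v x) (v y))
    (hpadic : ∀ q : ℚ, v (q : K) = (padicNorm p q : ℝ))
    (z w : K)
    (hz₁ : (p : ℝ) ^ (-(1 : ℝ) / ((p : ℝ) - 1)) < v z) (hz₂ : v z < 1)
    (hw : v w ≤ 1) :
    v ((p : K)⁻¹ * ((z + w) ^ p - (z + w) ^ p ^ 2)
        - (p : K)⁻¹ * (w ^ p - w ^ p ^ 2))
      = (p : ℝ) * v z ^ p := by
  have abv_p : v (p : K) = (p : ℝ)⁻¹ := by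
    simpa [padicNorm.padicNorm_p hp.one_lt] using hpadic p
  have z_pos : 0 < v z := (Real.rpow_nonneg p.cast_nonneg _).trans_lt hz₁
  have inv_p_lt : (p : ℝ)⁻¹ < v z ^ (p - 1) := by
    refine inv_lt_pow_of_rpow_neg_one_div_lt p.cast_nonneg (Nat.sub_ne_zero_of_lt hp.one_lt) ?_
    rwa [Nat.cast_pred hp.pos]
  have abv_p_mul_lt : v (p : K) * v z < v z ^ p := by
    rw [abv_p, ← pow_sub_one_mul hp.ne_zero]
    exact mul_lt_mul_of_pos_right inv_p_lt z_pos
  rw [← mul_sub, map_mul, map_inv₀, abv_p, inv_inv,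
    abv_pow_prime_sub_pow_sq_sub_eq hna hp abv_p_mul_lt hz₂ hw]
end

section
/- Let p be a prime number and let K be a field of characteristic 0 equipped with a nonarchimedean absolute value |·| whose restriction to ℚ is the p-adic absolute value, and assume K is complete and algebraically closed with respect to |·|. Let Q(z) = p^{-1}(z^p − z^{p²}) + p·z^{p²+1}. Then Q has a repelling fixed point of absolute value p²: there exists z₀ ∈ K with Q(z₀) = z₀, |z₀| = p², and |Q′(z₀)| > 1. -/
open Polynomial

/-- The polynomial `Q(z) = p⁻¹ (z ^ p - z ^ p²) + p z ^ (p² + 1)`. -/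
noncomputable def Qpoly (p : ℕ) (K : Type*) [Field K] : Polynomial K :=
  Polynomial.C ((p : K)⁻¹) * (Polynomial.X ^ p - Polynomial.X ^ p ^ 2)
    + Polynomial.C (p : K) * Polynomial.X ^ (p ^ 2 + 1)

/-!
The fixed points of `Q(z) = c (z ^ m - z ^ n) + c⁻¹ z ^ (n + 1)` are the roots of `Q - X`, and at
`a = c ^ 2` the two terms of top degree of `Q` cancel. So `|Q(a) - a| < |c⁻¹| |a| ^ (n + 1)`,
whereas `Q(a) - a` is `c⁻¹` times the product of `a - r` over the `n + 1` roots `r`; hence some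
root `z` satisfies `|a - z| < |a|`, which forces `|z| = |a|`. If `|n| < 1`, then `|n + 1| = 1` and
the term `(n + 1) c⁻¹ z ^ n` dominates `Q′(z)`, so `|Q′(z)| = |c| ^ (2 n - 1) > 1`.
-/

theorem exists_isRoot_abv_sub_lt_of_splits {K S : Type*} [CommRing K] [IsDomain K]
    [CommRing S] [LinearOrder S] [IsStrictOrderedRing S] (v : AbsoluteValue K S) {f : K[X]}
    (hf : f.Splits) {a : K} {r : S} (hr : 0 ≤ r)
    (h : v (f.eval a) < v f.leadingCoeff * r ^ f.natDegree) :
    ∃ z, f.IsRoot z ∧ v (a - z) < r := by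
  by_contra! hfar
  have hprod : r ^ f.natDegree ≤ (f.roots.map fun z ↦ v (a - z)).prod := by
    calc r ^ f.natDegree = (f.roots.map fun _ ↦ r).prod := by
          rw [Multiset.map_const', Multiset.prod_replicate, hf.natDegree_eq_card_roots]
      _ ≤ (f.roots.map fun z ↦ v (a - z)).prod :=
          Multiset.prod_map_le_prod_map₀ _ _ (fun _ _ ↦ hr)
            fun z hz ↦ hfar z (isRoot_of_mem_roots hz)
  have heval : v (f.eval a) = v f.leadingCoeff * (f.roots.map fun z ↦ v (a - z)).prod := by
    rw [hf.eval_eq_prod_roots, map_mul, map_multiset_prod, Multiset.map_map]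
    rfl
  exact h.not_ge (heval ▸ mul_le_mul_of_nonneg_left hprod (v.nonneg _))

theorem abv_sub_le_max {K S : Type*} [Ring K] [CommRing S] [LinearOrder S] [IsStrictOrderedRing S]
    {v : AbsoluteValue K S} (hv : IsNonarchimedean v) (x y : K) :
    v (x - y) ≤ max (v x) (v y) := by
  simpa only [sub_eq_add_neg, v.map_neg] using hv x (-y)

/-- The polynomial `c (z ^ m - z ^ n) + c⁻¹ z ^ (n + 1)`. Its scale `c` and its exponents are
independent of each other; `c = p⁻¹`, `m = p`, `n = p²` gives `Qpoly p K`. -/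
noncomputable def QpolyFamily {K : Type*} [Field K] (c : K) (m n : ℕ) : K[X] :=
  C c * (X ^ m - X ^ n) + C c⁻¹ * X ^ (n + 1)

theorem QpolyFamily_inv_natCast (p : ℕ) (K : Type*) [Field K] :
    QpolyFamily (p : K)⁻¹ p (p ^ 2) = Qpoly p K := by
  rw [QpolyFamily, Qpoly, inv_inv]

namespace QpolyFamily

variable {K : Type*} [Field K] {c : K} {m n : ℕ}

theorem coeff_succ_sub_X (hmn : m < n) : (QpolyFamily c m n - X).coeff (n + 1) = c⁻¹ := by
  simp [QpolyFamily, coeff_X, coeff_X_pow, show n + 1 ≠ m by lia, show n ≠ 0 by lia]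

theorem natDegree_sub_X (hc : c ≠ 0) (hmn : m < n) :
    (QpolyFamily c m n - X).natDegree = n + 1 := by
  refine natDegree_eq_of_le_of_coeff_ne_zero ?_ ?_
  · rw [QpolyFamily]
    compute_degree
    all_goals grind
  · rw [coeff_succ_sub_X hmn]
    exact inv_ne_zero hc

theorem leadingCoeff_sub_X (hc : c ≠ 0) (hmn : m < n) :
    (QpolyFamily c m n - X).leadingCoeff = c⁻¹ := by
  rw [leadingCoeff, natDegree_sub_X hc hmn, coeff_succ_sub_X hmn]

theorem eval_sq_sub_X (hc : c ≠ 0) :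
    (QpolyFamily c m n - X).eval (c ^ 2) = c ^ (2 * m + 1) - c ^ 2 := by
  simp only [QpolyFamily, eval_add, eval_sub, eval_mul, eval_pow, eval_X, eval_C]
  field_simp
  ring

variable {v : AbsoluteValue K ℝ}

theorem exists_eval_eq_self_abv_eq_sq (hv : IsNonarchimedean v) (hc : 1 < v c) (hmn : m < n)
    (hsplits : (QpolyFamily c m n - X).Splits) :
    ∃ z, (QpolyFamily c m n).eval z = z ∧ v z = v c ^ 2 := by
  have hc₀ : c ≠ 0 := v.pos_iff.mp (one_pos.trans hc)
  have hsmall : v ((QpolyFamily c m n - X).eval (c ^ 2)) <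
      v (QpolyFamily c m n - X).leadingCoeff *
        (v c ^ 2) ^ (QpolyFamily c m n - X).natDegree := by
    rw [leadingCoeff_sub_X hc₀ hmn, natDegree_sub_X hc₀ hmn, eval_sq_sub_X hc₀]
    calc v (c ^ (2 * m + 1) - c ^ 2) ≤ max (v c ^ (2 * m + 1)) (v c ^ 2) :=
          (abv_sub_le_max hv _ _).trans_eq (by rw [map_pow, map_pow])
      _ < v c ^ (2 * n + 1) :=
          max_lt (pow_lt_pow_right₀ hc (by lia)) (pow_lt_pow_right₀ hc (by lia))
      _ = v c⁻¹ * (v c ^ 2) ^ (n + 1) := by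
          rw [map_inv₀]
          field_simp
          ring
  obtain ⟨z, hz, hzc⟩ := exists_isRoot_abv_sub_lt_of_splits v hsplits (by positivity) hsmall
  refine ⟨z, by simpa [sub_eq_zero] using hz, ?_⟩
  rw [v.map_sub, ← map_pow] at hzc
  simpa using hv.add_eq_right_of_lt hzc

theorem abv_eval_derivative (hv : IsNonarchimedean v) (hc : 1 < v c) (hmn : m < n)
    (hn : v n < 1) {z : K} (hz : v z = v c ^ 2) :
    v ((QpolyFamily c m n).derivative.eval z) = v c ^ (2 * n - 1) := by
  have hn_ne_one : n ≠ 1 := by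
    rintro rfl
    simp at hn
  have hderiv : (QpolyFamily c m n).derivative.eval z =
      (m * (c * z ^ (m - 1)) - n * (c * z ^ (n - 1))) + (n + 1) * (c⁻¹ * z ^ n) := by
    simp only [QpolyFamily, derivative_add, derivative_sub, derivative_C_mul, derivative_X_pow,
      map_natCast, Nat.cast_succ, Nat.add_sub_cancel, eval_add, eval_sub, eval_mul, eval_pow,
      eval_C, eval_X, eval_natCast]
    ring
  have hterm (k : ℕ) : v (c * z ^ k) = v c ^ (2 * k + 1) := by
    rw [map_mul, map_pow, hz, ← pow_mul, ← pow_succ']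
  have hm_term : v (m * (c * z ^ (m - 1))) < v c ^ (2 * n - 1) :=
    calc v (m * (c * z ^ (m - 1))) ≤ v c ^ (2 * (m - 1) + 1) :=
          hv.nmul_le.trans_eq (hterm _)
      _ < v c ^ (2 * n - 1) := pow_lt_pow_right₀ hc (by lia)
  have hn_term : v (n * (c * z ^ (n - 1))) < v c ^ (2 * n - 1) := by
    rw [map_mul, hterm, show 2 * (n - 1) + 1 = 2 * n - 1 by lia]
    exact mul_lt_of_lt_one_left (by positivity) hn
  have hlead : v ((n + 1) * (c⁻¹ * z ^ n)) = v c ^ (2 * n - 1) := by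
    have hn_add_one : v (n + 1 : K) = 1 := by
      rw [hv.add_eq_right_of_lt (by rwa [map_one]), map_one]
    rw [map_mul, hn_add_one, one_mul, map_mul, map_inv₀, map_pow, hz, ← pow_mul,
      pow_sub₀ _ (by positivity) (by lia), pow_one, mul_comm]
  have hlower : v (m * (c * z ^ (m - 1)) - n * (c * z ^ (n - 1))) < v c ^ (2 * n - 1) :=
    (abv_sub_le_max hv _ _).trans_lt (max_lt hm_term hn_term)
  rw [hderiv, hv.add_eq_right_of_lt (hlower.trans_eq hlead.symm), hlead]

end QpolyFamily

section PadicRestriction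

variable {p : ℕ} {K : Type*} [DivisionRing K] {v : AbsoluteValue K ℝ}

theorem abv_inv_natCast_of_padic (hp : 1 < p)
    (hpadic : ∀ q : ℚ, v (q : K) = (padicNorm p q : ℝ)) : v (p : K)⁻¹ = p := by
  have hvp : v (p : K) = (p : ℝ)⁻¹ := by
    simpa [padicNorm.padicNorm_p hp] using hpadic p
  rw [map_inv₀, hvp, inv_inv]

theorem abv_natCast_lt_one_iff_of_padic (hp : p.Prime)
    (hpadic : ∀ q : ℚ, v (q : K) = (padicNorm p q : ℝ)) (n : ℕ) : v (n : K) < 1 ↔ p ∣ n := by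
  have := Fact.mk hp
  rw [← Rat.cast_natCast, hpadic, ← padicNorm.nat_lt_one_iff]
  exact_mod_cast Iff.rfl

end PadicRestriction

theorem stmt_9_general {K : Type*} [Field K] {v : AbsoluteValue K ℝ} (hv : IsNonarchimedean v)
    {c : K} (hc : 1 < v c) {m n : ℕ} (hmn : m < n) (hn : v n < 1)
    (hsplits : (QpolyFamily c m n - X).Splits) :
    ∃ z₀, (QpolyFamily c m n).eval z₀ = z₀ ∧ v z₀ = v c ^ 2 ∧
      1 < v ((QpolyFamily c m n).derivative.eval z₀) := by
  obtain ⟨z₀, hfix, hz₀⟩ := QpolyFamily.exists_eval_eq_self_abv_eq_sq hv hc hmn hsplits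
  refine ⟨z₀, hfix, hz₀, ?_⟩
  rw [QpolyFamily.abv_eval_derivative hv hc hmn hn hz₀]
  exact one_lt_pow₀ hc (by lia)

/-- Let `p` be prime and `(K, v)` a complete algebraically closed field
of characteristic zero whose absolute value restricts to the `p`-adic one on `ℚ`.  Then
`Q(z) = p⁻¹ (z ^ p - z ^ p²) + p z ^ (p² + 1)` has a repelling fixed point of absolute
value `p²`: there is `z₀` with `Q z₀ = z₀`, `v z₀ = p²` and `v (Q′ z₀) > 1`. -/
theorem stmt_9 (p : ℕ) (hp : p.Prime) {K : Type*} [Field K] [CharZero K] [IsAlgClosed K]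
    (v : AbsoluteValue K ℝ)
    (hna : ∀ x y : K, v (x + y) ≤ max (v x) (v y))
    (hpadic : ∀ q : ℚ, v (q : K) = (padicNorm p q : ℝ))
    (hcomplete : ∀ f : ℕ → K,
      (∀ ε : ℝ, 0 < ε → ∃ N : ℕ, ∀ m ≥ N, ∀ n ≥ N, v (f m - f n) < ε) →
      ∃ L : K, ∀ ε : ℝ, 0 < ε → ∃ N : ℕ, ∀ n ≥ N, v (f n - L) < ε) :
    ∃ z₀ : K, (Qpoly p K).eval z₀ = z₀ ∧ v z₀ = (p : ℝ) ^ 2 ∧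
      1 < v ((Polynomial.derivative (Qpoly p K)).eval z₀) := by
  have hvc : v (p : K)⁻¹ = p := abv_inv_natCast_of_padic hp.one_lt hpadic
  have hn : v ((p ^ 2 : ℕ) : K) < 1 :=
    (abv_natCast_lt_one_iff_of_padic hp hpadic _).mpr (dvd_pow_self p two_ne_zero)
  rw [← QpolyFamily_inv_natCast, ← hvc]
  exact stmt_9_general hna (by simpa [hvc] using hp.one_lt) (lt_self_pow₀ hp.one_lt one_lt_two) hn
    (IsAlgClosed.splits _)
end

section
/- Let p be a prime number and let K be a field of characteristic 0 equipped with a nonarchimedean absolute value |·| whose restriction to ℚ is the p-adic absolute value, and assume K is complete and algebraically closed with respect to |·|. Let P(z) = p^{-1}(z^p − z^{p²}). Let B = {z ∈ K : |z − c| ≤ r} be a closed ball contained in {z ∈ K : |z| ≤ 1}, with radius r satisfying p^{-1/(p−1)} ≤ r ≤ 1. Then the preimage {z ∈ K : P(z) ∈ B} is the union of exactly p pairwise disjoint closed balls, each of radius (r/p)^{1/p}, and P maps each of these p balls onto B. -/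
/-!
Write `P z = p⁻¹ G (z ^ p)` with `G x = x - x ^ p`, and take preimages of `B` through the three
factors of `P` in turn. The scaling by `p⁻¹` pulls `B` back to the ball of radius `r / p < 1`
around `p c`.

Modulo the maximal ideal, `G` has derivative `1` on the integers, so it is an isometry on residue
discs, and the monic polynomial `X ^ p - X + p c` has `p` simple roots in distinct residue discs.
A point `y` with `|G y - p c| < 1` lies in the residue disc of a root, because `G y - p c` is up to
sign the product of the differences of `y` with the roots. Hence `G` pulls the ball back to `p`
disjoint balls of the same radius.

Finally `(a + h) ^ p = a ^ p + h ^ p` up to an error of size at most `|p| |h|`, which `h ^ p`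
dominates as soon as `|h| ^ (p - 1) > |p|`. The lower bound on `r` is what makes this true outside
the ball of radius `(r / p) ^ (1 / p)`, so the `p`-th power map pulls each of the `p` balls back to
a single ball of that radius.
-/

open Polynomial

section ClosedDisc

/-- The closed ball `{z : v (z - a) ≤ ρ}` of an absolute value, as a plain set: no topology or
metric on `R` is involved. -/
def closedDisc {R : Type*} [Ring R] (v : AbsoluteValue R ℝ) (a : R) (ρ : ℝ) : Set R :=
  {z | v (z - a) ≤ ρ}

lemma preimage_inv_mul_closedDisc {K : Type*} [Field K] (v : AbsoluteValue K ℝ) {b : K}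
    (hb : b ≠ 0) (c : K) (r : ℝ) :
    (b⁻¹ * ·) ⁻¹' closedDisc v c r = closedDisc v (b * c) (v b * r) := by
  ext x
  have hx : x - b * c = b * (b⁻¹ * x - c) := by field_simp
  simp only [closedDisc, Set.mem_preimage, Set.mem_ofPred_eq, hx, map_mul,
    mul_le_mul_iff_right₀ (v.pos hb)]

end ClosedDisc

section Nonarchimedean

variable {R : Type*} [CommRing R] {v : AbsoluteValue R ℝ}

lemma apply_sub_le_max (hna : IsNonarchimedean v) (x y : R) : v (x - y) ≤ max (v x) (v y) := by
  simpa only [sub_eq_add_neg, v.map_neg] using hna x (-y)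

lemma apply_le_one_of_apply_sub_le_one (hna : IsNonarchimedean v) {x y : R}
    (hxy : v (x - y) ≤ 1) (hy : v y ≤ 1) : v x ≤ 1 := by
  simpa only [sub_add_cancel] using (hna (x - y) y).trans (max_le hxy hy)

variable [Nontrivial R]

lemma apply_le_one_of_apply_sub_pow_le_one (hna : IsNonarchimedean v) {n : ℕ} (hn : 1 < n) {x : R}
    (hx : v (x - x ^ n) ≤ 1) : v x ≤ 1 := by
  by_contra! hlt
  have hdom : v x < v (x ^ n) := by
    rw [map_pow]
    exact lt_self_pow₀ hlt hn
  have heq : v (x - x ^ n) = v (x ^ n) := by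
    rw [sub_eq_add_neg, hna.add_eq_right_of_lt (by rwa [v.map_neg]), v.map_neg]
  linarith

variable {p : ℕ}

lemma apply_add_pow_sub_le (hna : IsNonarchimedean v) (hp : p.Prime) {a h : R} (ha : v a ≤ 1)
    (hh : v h ≤ 1) : v ((a + h) ^ p - a ^ p - h ^ p) ≤ v p * v h := by
  set S : R := ∑ k ∈ Finset.Ioo 0 p, a ^ (k - 1) * h ^ (p - k - 1) * ((p.choose k / p : ℕ) : R)
  have hS : v S ≤ 1 := by
    refine Finset.sum_induction _ (fun x => v x ≤ 1)
      (fun x y hx hy => (hna x y).trans (max_le hx hy)) (by simp) fun k _ => ?_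
    simp only [map_mul, map_pow]
    exact mul_le_one₀ (mul_le_one₀ (pow_le_one₀ (v.nonneg _) ha) (by positivity)
      (pow_le_one₀ (v.nonneg _) hh)) (v.nonneg _) hna.apply_natCast_le_one
  calc v ((a + h) ^ p - a ^ p - h ^ p) = v (p * a * h * S) := by
        rw [add_pow_prime_eq hp]
        congr 1
        ring
    _ = v p * v a * v h * v S := by simp only [map_mul]
    _ ≤ v p * 1 * v h * 1 := by gcongr
    _ = v p * v h := by ring

lemma apply_sub_pow_sub_sub_pow (hna : IsNonarchimedean v) (hp : p.Prime) (hvp : v p < 1) {a x : R}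
    (ha : v a ≤ 1) (hx : v (x - a) < 1) : v ((x - x ^ p) - (a - a ^ p)) = v (x - a) := by
  obtain ⟨h, rfl⟩ : ∃ h, x = a + h := ⟨x - a, by ring⟩
  rw [add_sub_cancel_left] at hx ⊢
  rcases eq_or_ne h 0 with rfl | h_ne
  · simp
  have h_pos : 0 < v h := v.pos h_ne
  have h_cross : v ((a + h) ^ p - a ^ p - h ^ p) < v h :=
    (apply_add_pow_sub_le hna hp ha hx.le).trans_lt (mul_lt_of_lt_one_left h_pos hvp)
  have h_pow : v (h ^ p) < v h := by
    rw [map_pow]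
    exact pow_lt_self_of_lt_one₀ h_pos hx hp.one_lt
  have h_err : v (-((a + h) ^ p - a ^ p - h ^ p + h ^ p)) < v h := by
    rw [v.map_neg]
    exact (hna _ _).trans_lt (max_lt h_cross h_pow)
  rw [← hna.add_eq_right_of_lt h_err]
  congr 1
  ring

lemma apply_pow_sub_pow_le_iff (hna : IsNonarchimedean v) (hp : p.Prime) {ρ : ℝ} (hρ : 0 ≤ ρ)
    (hvp : v p ≤ ρ ^ (p - 1)) {a z : R} (ha : v a ≤ 1) (hz : v z ≤ 1) :
    v (z ^ p - a ^ p) ≤ ρ ^ p ↔ v (z - a) ≤ ρ := by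
  obtain ⟨h, rfl⟩ : ∃ h, z = a + h := ⟨z - a, by ring⟩
  have hh : v h ≤ 1 := by
    simpa only [add_sub_cancel_left] using (apply_sub_le_max hna (a + h) a).trans (max_le hz ha)
  have h_cross := apply_add_pow_sub_le hna hp ha hh
  have h_split : (a + h) ^ p - a ^ p = ((a + h) ^ p - a ^ p - h ^ p) + h ^ p := by ring
  have pow_eq (t : ℝ) : t ^ p = t ^ (p - 1) * t := (pow_sub_one_mul hp.ne_zero t).symm
  rw [add_sub_cancel_left, h_split]
  constructor
  · contrapose!
    intro hlt
    have h_dom : v p * v h < v (h ^ p) := by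
      rw [map_pow, pow_eq]
      exact mul_lt_mul_of_pos_right
        (hvp.trans_lt (pow_lt_pow_left₀ hlt hρ (Nat.sub_ne_zero_of_lt hp.one_lt)))
        (hρ.trans_lt hlt)
    rw [hna.add_eq_right_of_lt (h_cross.trans_lt h_dom), map_pow]
    exact pow_lt_pow_left₀ hlt hρ hp.ne_zero
  · intro hle
    refine (hna _ _).trans (max_le (h_cross.trans ?_) ?_)
    · rw [pow_eq]
      gcongr
    · rw [map_pow]
      gcongr

lemma preimage_pow_closedDisc (hna : IsNonarchimedean v) (hp : p.Prime) {ρ : ℝ} (hρ : 0 ≤ ρ)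
    (hρ_le : ρ ≤ 1) (hvp : v p ≤ ρ ^ (p - 1)) {a : R} (ha : v a ≤ 1) :
    (· ^ p) ⁻¹' closedDisc v (a ^ p) (ρ ^ p) = closedDisc v a ρ := by
  ext z
  constructor
  · intro h
    have hzp : v (z ^ p) ≤ 1 := apply_le_one_of_apply_sub_le_one hna
      (h.trans (pow_le_one₀ hρ hρ_le)) (by rw [map_pow]; exact pow_le_one₀ (v.nonneg _) ha)
    have hz : v z ≤ 1 := by
      rwa [map_pow, pow_le_one_iff_of_nonneg (v.nonneg _) hp.ne_zero] at hzp
    exact (apply_pow_sub_pow_le_iff hna hp hρ hvp ha hz).1 h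
  · intro h
    have hz : v z ≤ 1 := apply_le_one_of_apply_sub_le_one hna (h.trans hρ_le) ha
    exact (apply_pow_sub_pow_le_iff hna hp hρ hvp ha hz).2 h

lemma disjoint_closedDisc_of_sub_pow_eq (hna : IsNonarchimedean v) (hp : p.Prime) (hvp : v p < 1)
    {a b : R} (ha : v a ≤ 1) (hG : a - a ^ p = b - b ^ p) (hab : a ≠ b) {s : ℝ} (hs : s < 1) :
    Disjoint (closedDisc v a s) (closedDisc v b s) := by
  rw [Set.disjoint_left]
  intro z hza hzb
  have hba : v (b - a) < 1 := by
    have h := apply_sub_le_max hna (z - a) (z - b)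
    rw [sub_sub_sub_cancel_left] at h
    exact h.trans_lt ((max_le hza hzb).trans_lt hs)
  have h := apply_sub_pow_sub_sub_pow hna hp hvp ha hba
  rw [hG, sub_self, map_zero] at h
  exact hab (sub_eq_zero.1 (v.eq_zero.1 h.symm)).symm

end Nonarchimedean

section Roots

variable {K : Type*} [Field K] {v : AbsoluteValue K ℝ}

lemma exists_mem_roots_apply_sub_lt {f : K[X]} (hf : f.Monic) (hsplit : f.Splits) {ε : ℝ}
    (hε : 0 ≤ ε) {y : K} (hy : v (f.eval y) < ε ^ f.natDegree) : ∃ x ∈ f.roots, v (y - x) < ε := by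
  by_contra! hfar
  refine hy.not_ge ?_
  calc ε ^ f.natDegree = (f.roots.map fun _ => ε).prod := by
        rw [Multiset.map_const', Multiset.prod_replicate, hsplit.natDegree_eq_card_roots]
    _ ≤ (f.roots.map fun x => v (y - x)).prod :=
        Multiset.prod_map_le_prod_map₀ _ _ (fun _ _ => hε) hfar
    _ = v (f.eval y) := by
        rw [hsplit.eval_eq_prod_roots_of_monic hf, map_multiset_prod, Multiset.map_map]
        rfl

/-- The monic polynomial `X ^ n - X + u`, whose roots are the solutions of `x - x ^ n = u`; it is
bracketed so that the lower-order part is `X - C u`. -/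
noncomputable def artinSchreierPoly (n : ℕ) (u : K) : K[X] := X ^ n - (X - C u)

lemma artinSchreierPoly_eval (n : ℕ) (u x : K) :
    (artinSchreierPoly n u).eval x = u - (x - x ^ n) := by
  simp only [artinSchreierPoly, eval_sub, eval_pow, eval_X, eval_C]
  ring

lemma artinSchreierPoly_monic {n : ℕ} (hn : 1 < n) (u : K) : (artinSchreierPoly n u).Monic :=
  monic_X_pow_sub (by rw [degree_X_sub_C]; exact_mod_cast hn)

lemma artinSchreierPoly_natDegree {n : ℕ} (hn : 1 < n) (u : K) :
    (artinSchreierPoly n u).natDegree = n := by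
  rw [artinSchreierPoly, natDegree_sub_eq_left_of_natDegree_lt] <;> simp [hn]

lemma artinSchreierPoly_isRoot_iff {n : ℕ} {u x : K} :
    (artinSchreierPoly n u).IsRoot x ↔ x - x ^ n = u := by
  rw [IsRoot.def, artinSchreierPoly_eval, sub_eq_zero, eq_comm]

variable [IsAlgClosed K]

lemma artinSchreierPoly_separable (hna : IsNonarchimedean v) {n : ℕ} (hn : 1 < n) (hvn : v n < 1)
    {u : K} (hu : v u ≤ 1) : (artinSchreierPoly n u).Separable := by
  rw [separable_def, isCoprime_iff_aeval_ne_zero_of_isAlgClosed K K]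
  intro x
  by_contra! ⟨hroot, hderiv⟩
  have hx : v x ≤ 1 := by
    rw [coe_aeval_eq_eval, ← IsRoot.def, artinSchreierPoly_isRoot_iff] at hroot
    exact apply_le_one_of_apply_sub_pow_le_one hna hn (hroot ▸ hu)
  have hunit : (n : K) * x ^ (n - 1) = 1 := by
    simpa [artinSchreierPoly, derivative_X_pow, sub_eq_zero] using hderiv
  have hlt : v ((n : K) * x ^ (n - 1)) < 1 := by
    rw [map_mul, map_pow]
    exact mul_lt_one_of_nonneg_of_lt_one_left (v.nonneg _) hvn (pow_le_one₀ (v.nonneg _) hx)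
  rw [hunit, map_one] at hlt
  exact hlt.false

lemma exists_injective_range_eq_sub_pow_eq (hna : IsNonarchimedean v) {n : ℕ} (hn : 1 < n)
    (hvn : v n < 1) {u : K} (hu : v u ≤ 1) :
    ∃ x : Fin n → K, x.Injective ∧ Set.range x = {a | a - a ^ n = u} := by
  classical
  have hcard : Fintype.card ((artinSchreierPoly n u).rootSet K) = n := by
    rw [card_rootSet_eq_natDegree (artinSchreierPoly_separable hna hn hvn hu)
      (IsAlgClosed.splits _), artinSchreierPoly_natDegree hn]
  let e := (Fintype.equivFinOfCardEq hcard).symm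
  refine ⟨fun i => e i, Subtype.val_injective.comp e.injective, ?_⟩
  ext a
  rw [Set.mem_ofPred_eq, ← artinSchreierPoly_isRoot_iff, IsRoot.def, ← coe_aeval_eq_eval,
    ← mem_rootSet_of_ne (artinSchreierPoly_monic hn u).ne_zero]
  exact ⟨fun ⟨i, hi⟩ => hi ▸ (e i).2, fun ha => ⟨e.symm ⟨a, ha⟩, by simp⟩⟩

lemma exists_sub_pow_eq_apply_sub_lt_one {n : ℕ} (hn : 1 < n) {u y : K}
    (hy : v ((y - y ^ n) - u) < 1) : ∃ x, x - x ^ n = u ∧ v (y - x) < 1 := by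
  rw [v.map_sub, ← artinSchreierPoly_eval] at hy
  obtain ⟨x, hx, hyx⟩ := exists_mem_roots_apply_sub_lt (v := v) (artinSchreierPoly_monic hn u)
    (IsAlgClosed.splits _) zero_le_one (by rwa [one_pow])
  exact ⟨x, artinSchreierPoly_isRoot_iff.1 (isRoot_of_mem_roots hx), hyx⟩

variable {p : ℕ} {s : ℝ}

lemma image_sub_pow_closedDisc (hna : IsNonarchimedean v) (hp : p.Prime) (hvp : v p < 1) {a : K}
    (ha : v a ≤ 1) (hs : s < 1) :
    (fun x => x - x ^ p) '' closedDisc v a s = closedDisc v (a - a ^ p) s := by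
  apply Set.Subset.antisymm
  · rintro _ ⟨x, hx, rfl⟩
    exact (apply_sub_pow_sub_sub_pow hna hp hvp ha (hx.trans_lt hs)).trans_le hx
  · intro w hw
    obtain ⟨x, rfl, hax⟩ : ∃ x, x - x ^ p = w ∧ v (a - x) < 1 :=
      exists_sub_pow_eq_apply_sub_lt_one hp.one_lt (by rw [v.map_sub]; exact hw.trans_lt hs)
    rw [v.map_sub] at hax
    exact ⟨x, (apply_sub_pow_sub_sub_pow hna hp hvp ha hax).symm.trans_le hw, rfl⟩

lemma preimage_sub_pow_closedDisc (hna : IsNonarchimedean v) (hp : p.Prime) (hvp : v p < 1) {u : K}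
    (hu : v u ≤ 1) (hs : s < 1) :
    (fun x => x - x ^ p) ⁻¹' closedDisc v u s = ⋃ a ∈ {a | a - a ^ p = u}, closedDisc v a s := by
  have isometry {a y : K} (ha : a - a ^ p = u) (hy : v (y - a) < 1) :
      v ((y - y ^ p) - u) = v (y - a) := by
    have ha_le : v a ≤ 1 := apply_le_one_of_apply_sub_pow_le_one hna hp.one_lt (ha ▸ hu)
    rw [← ha, apply_sub_pow_sub_sub_pow hna hp hvp ha_le hy]
  ext y
  rw [Set.mem_iUnion₂]
  constructor
  · intro hy
    obtain ⟨a, ha, hya⟩ := exists_sub_pow_eq_apply_sub_lt_one hp.one_lt (hy.trans_lt hs)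
    exact ⟨a, ha, (isometry ha hya).symm.trans_le hy⟩
  · rintro ⟨a, ha, hy⟩
    exact (isometry ha (hy.trans_lt hs)).trans_le hy

lemma exists_preimage_pow_sub_pow_closedDisc (hna : IsNonarchimedean v) (hp : p.Prime)
    (hvp : v p < 1) {u : K} (hu : v u ≤ 1) {ρ : ℝ} (hρ : 0 ≤ ρ) (hρ_lt : ρ < 1)
    (hvp_le : v p ≤ ρ ^ (p - 1)) :
    ∃ a : Fin p → K,
      (∀ i j, i ≠ j → Disjoint (closedDisc v (a i) ρ) (closedDisc v (a j) ρ)) ∧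
      (fun z => z ^ p - (z ^ p) ^ p) ⁻¹' closedDisc v u (ρ ^ p) = ⋃ i, closedDisc v (a i) ρ ∧
      ∀ i, (fun z => z ^ p - (z ^ p) ^ p) '' closedDisc v (a i) ρ = closedDisc v u (ρ ^ p) := by
  obtain ⟨x, hx_inj, hx_range⟩ := exists_injective_range_eq_sub_pow_eq hna hp.one_lt hvp hu
  have hx (i) : x i - x i ^ p = u := hx_range.subset ⟨i, rfl⟩
  have hx_le (i) : v (x i) ≤ 1 :=
    apply_le_one_of_apply_sub_pow_le_one hna hp.one_lt ((hx i).symm ▸ hu)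
  have pow_surjective : Function.Surjective (· ^ p : K → K) :=
    fun y => IsAlgClosed.exists_pow_nat_eq y hp.pos
  choose a ha using fun i => pow_surjective (x i)
  have ha_le (i) : v (a i) ≤ 1 := by
    rw [← pow_le_one_iff_of_nonneg (v.nonneg _) hp.ne_zero, ← map_pow]
    exact (congrArg v (ha i)).trans_le (hx_le i)
  have hs : ρ ^ p < 1 := pow_lt_one₀ hρ hρ_lt hp.ne_zero
  have hpow (i) : (· ^ p) ⁻¹' closedDisc v (x i) (ρ ^ p) = closedDisc v (a i) ρ := by
    rw [← ha i]
    exact preimage_pow_closedDisc hna hp hρ hρ_lt.le hvp_le (ha_le i)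
  have hcomp : (fun z : K => z ^ p - (z ^ p) ^ p) = (fun x => x - x ^ p) ∘ (· ^ p) := rfl
  refine ⟨a, fun i j hij => ?_, ?_, fun i => ?_⟩
  · rw [← hpow, ← hpow]
    exact (disjoint_closedDisc_of_sub_pow_eq hna hp hvp (hx_le i) ((hx i).trans (hx j).symm)
      (hx_inj.ne hij) hs).preimage _
  · simp only [hcomp, Set.preimage_comp, preimage_sub_pow_closedDisc hna hp hvp hu hs, ← hx_range,
      Set.biUnion_range, Set.preimage_iUnion, hpow]
  · rw [hcomp, Set.image_comp, ← hpow, Set.image_preimage_eq _ pow_surjective,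
      image_sub_pow_closedDisc hna hp hvp (hx_le i) hs, hx]

end Roots

lemma inv_le_div_rpow_inv_pow {n : ℕ} (hn : 1 < n) {r : ℝ}
    (hr : (n : ℝ) ^ (-(1 : ℝ) / ((n : ℝ) - 1)) ≤ r) :
    (n : ℝ)⁻¹ ≤ ((r / n) ^ ((1 : ℝ) / (n : ℝ))) ^ (n - 1) := by
  have hn_pos : (0 : ℝ) < n := by positivity
  have hn_sub : (0 : ℝ) < (n : ℝ) - 1 := sub_pos.2 (by exact_mod_cast hn)
  have hr_nonneg : 0 ≤ r := (Real.rpow_nonneg hn_pos.le _).trans hr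
  calc (n : ℝ)⁻¹ = ((n : ℝ) ^ (-(1 : ℝ) / ((n : ℝ) - 1)) / n) ^ (1 / (n : ℝ) * ((n : ℝ) - 1)) := by
        rw [← Real.rpow_sub_one hn_pos.ne', ← Real.rpow_mul hn_pos.le, ← Real.rpow_neg_one]
        congr 1
        field_simp
        ring
    _ ≤ (r / n) ^ (1 / (n : ℝ) * ((n : ℝ) - 1)) := by gcongr
    _ = ((r / n) ^ ((1 : ℝ) / (n : ℝ))) ^ (n - 1) := by
        rw [Real.rpow_mul (by positivity), ← Nat.cast_pred (by lia), Real.rpow_natCast]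

theorem stmt_10_general {p : ℕ} (hp : p.Prime) {K : Type*} [Field K] [IsAlgClosed K]
    {v : AbsoluteValue K ℝ} (hna : IsNonarchimedean v) (hvp : v p = (p : ℝ)⁻¹) {c : K} {r : ℝ}
    (hr : (p : ℝ) ^ (-(1 : ℝ) / ((p : ℝ) - 1)) ≤ r) (hrp : r < p) (hc : v c ≤ p) :
    ∃ a : Fin p → K,
      (∀ i j : Fin p, i ≠ j →
        Disjoint (closedDisc v (a i) ((r / (p : ℝ)) ^ ((1 : ℝ) / (p : ℝ))))
          (closedDisc v (a j) ((r / (p : ℝ)) ^ ((1 : ℝ) / (p : ℝ))))) ∧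
      ((fun z : K => (p : K)⁻¹ * (z ^ p - z ^ p ^ 2)) ⁻¹' closedDisc v c r
        = ⋃ i : Fin p, closedDisc v (a i) ((r / (p : ℝ)) ^ ((1 : ℝ) / (p : ℝ)))) ∧
      (∀ i : Fin p,
        (fun z : K => (p : K)⁻¹ * (z ^ p - z ^ p ^ 2))
            '' closedDisc v (a i) ((r / (p : ℝ)) ^ ((1 : ℝ) / (p : ℝ)))
          = closedDisc v c r) := by
  have hp_one : (1 : ℝ) < p := by exact_mod_cast hp.one_lt
  have hp_pos : (0 : ℝ) < p := zero_lt_one.trans hp_one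
  have hpK : (p : K) ≠ 0 := v.ne_zero_iff.1 (by rw [hvp]; positivity)
  have hvp_lt : v (p : K) < 1 := hvp ▸ inv_lt_one_of_one_lt₀ hp_one
  have hr_pos : 0 < r := (Real.rpow_pos_of_pos hp_pos _).trans_le hr
  have hu : v ((p : K) * c) ≤ 1 := by
    rwa [map_mul, hvp, inv_mul_le_one₀ hp_pos]
  set ρ : ℝ := (r / (p : ℝ)) ^ ((1 : ℝ) / (p : ℝ)) with hρ_def
  have hρ_pow : ρ ^ p = v p * r := by
    rw [hρ_def, one_div, Real.rpow_inv_natCast_pow (by positivity) hp.ne_zero, hvp,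
      inv_mul_eq_div]
  have hρ_lt : ρ < 1 := Real.rpow_lt_one (by positivity) ((div_lt_one hp_pos).2 hrp) (by positivity)
  have hvp_le : v p ≤ ρ ^ (p - 1) := hvp ▸ inv_le_div_rpow_inv_pow hp.one_lt hr
  have hfactor : (fun z : K => (p : K)⁻¹ * (z ^ p - z ^ p ^ 2))
      = ((p : K)⁻¹ * ·) ∘ fun z => z ^ p - (z ^ p) ^ p := by
    funext z
    simp only [Function.comp_apply, ← pow_mul, sq]
  have hscale := preimage_inv_mul_closedDisc v hpK c r
  obtain ⟨a, hdisj, hpreimage, himage⟩ :=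
    exists_preimage_pow_sub_pow_closedDisc hna hp hvp_lt hu (by positivity) hρ_lt hvp_le
  refine ⟨a, hdisj, ?_, fun i => ?_⟩
  · rw [hfactor, Set.preimage_comp, hscale, ← hρ_pow, hpreimage]
  · rw [hfactor, Set.image_comp, himage, hρ_pow, ← hscale,
      Set.image_preimage_eq _ (mul_left_surjective₀ (inv_ne_zero hpK))]

/-- Let `p` be prime, `(K, v)` complete algebraically closed of
characteristic zero with `v` restricting to the `p`-adic absolute value on `ℚ`, and let
`P z = p⁻¹ (z ^ p - z ^ p²)`.  Let `B = {z : v (z - c) ≤ r}` be a closed ball contained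
in the closed unit ball, with `p ^ (-1/(p-1)) ≤ r ≤ 1`.  Then `P⁻¹(B)` is the union of
exactly `p` pairwise disjoint closed balls, each of radius `(r / p) ^ (1/p)`, and `P`
maps each of these balls onto `B`. -/
theorem stmt_10 (p : ℕ) (hp : p.Prime) {K : Type*} [Field K] [CharZero K] [IsAlgClosed K]
    (v : AbsoluteValue K ℝ)
    (hna : ∀ x y : K, v (x + y) ≤ max (v x) (v y))
    (hpadic : ∀ q : ℚ, v (q : K) = (padicNorm p q : ℝ))
    (hcomplete : ∀ f : ℕ → K,
      (∀ ε : ℝ, 0 < ε → ∃ N : ℕ, ∀ m ≥ N, ∀ n ≥ N, v (f m - f n) < ε) →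
      ∃ L : K, ∀ ε : ℝ, 0 < ε → ∃ N : ℕ, ∀ n ≥ N, v (f n - L) < ε)
    (c : K) (r : ℝ)
    (hr₁ : (p : ℝ) ^ (-(1 : ℝ) / ((p : ℝ) - 1)) ≤ r) (hr₂ : r ≤ 1)
    (hB : ∀ z : K, v (z - c) ≤ r → v z ≤ 1) :
    ∃ a : Fin p → K,
      (∀ i j : Fin p, i ≠ j →
        Disjoint {z : K | v (z - a i) ≤ (r / (p : ℝ)) ^ ((1 : ℝ) / (p : ℝ))}
          {z : K | v (z - a j) ≤ (r / (p : ℝ)) ^ ((1 : ℝ) / (p : ℝ))}) ∧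
      ({z : K | v ((p : K)⁻¹ * (z ^ p - z ^ p ^ 2) - c) ≤ r}
        = ⋃ i : Fin p, {z : K | v (z - a i) ≤ (r / (p : ℝ)) ^ ((1 : ℝ) / (p : ℝ))}) ∧
      (∀ i : Fin p,
        (fun z : K => (p : K)⁻¹ * (z ^ p - z ^ p ^ 2))
            '' {z : K | v (z - a i) ≤ (r / (p : ℝ)) ^ ((1 : ℝ) / (p : ℝ))}
          = {w : K | v (w - c) ≤ r}) := by
  have hp_one : (1 : ℝ) < p := by exact_mod_cast hp.one_lt
  have hc : v c ≤ 1 := hB c (by simpa using (Real.rpow_nonneg p.cast_nonneg _).trans hr₁)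
  exact stmt_10_general hp hna (by simpa [padicNorm.padicNorm_p hp.one_lt] using hpadic p) hr₁
    (hr₂.trans_lt hp_one) (hc.trans hp_one.le)
end
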